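/- Let H⁺_{t,q} be the subalgebra of H_{t,q} generated by T, T⁻¹, X₁, X₂, Y₁, Y₂, with the ℤ²-grading determined by deg X₁ = deg X₂ = (0,1), deg Y₁ = deg Y₂ = (1,0), deg T = (0,0). For every (M,N) ∈ ℕ₀², the ℂ-dimension of the degree-(M,N) graded piece of eH⁺_{t,q}e equals the number of tuples (a₁, a₂, b₁, b₂, ε) ∈ ℕ₀⁴ × {0,1} with a₁ + 2a₂ + ε = M and b₁ + 2b₂ + ε = N. -/

import Mathlib

noncomputable section

/-- Generators of the double affine Hecke algebra of type GL₂: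
`T, T⁻¹, X₁, X₁⁻¹, X₂, X₂⁻¹, Y₁, Y₁⁻¹, Y₂, Y₂⁻¹`. -/
inductive DGen : Type
  | T | Ti | X1 | X1i | X2 | X2i | Y1 | Y1i | Y2 | Y2i

abbrev FD : Type := FreeAlgebra ℂ DGen

def gD : DGen → FD := FreeAlgebra.ι ℂ

/-- The defining relations of the double affine Hecke algebra `H_{t,q}` of type GL₂. -/
inductive DRel (q t : ℂ) : FD → FD → Prop
  | TTi : DRel q t (gD .T * gD .Ti) 1
  | TiT : DRel q t (gD .Ti * gD .T) 1
  | X1X1i : DRel q t (gD .X1 * gD .X1i) 1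
  | X1iX1 : DRel q t (gD .X1i * gD .X1) 1
  | X2X2i : DRel q t (gD .X2 * gD .X2i) 1
  | X2iX2 : DRel q t (gD .X2i * gD .X2) 1
  | Y1Y1i : DRel q t (gD .Y1 * gD .Y1i) 1
  | Y1iY1 : DRel q t (gD .Y1i * gD .Y1) 1
  | Y2Y2i : DRel q t (gD .Y2 * gD .Y2i) 1
  | Y2iY2 : DRel q t (gD .Y2i * gD .Y2) 1
  | TX1T : DRel q t (gD .T * gD .X1 * gD .T) (gD .X2)
  | TiY1Ti : DRel q t (gD .Ti * gD .Y1 * gD .Ti) (gD .Y2)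
  | Xcomm : DRel q t (gD .X1 * gD .X2) (gD .X2 * gD .X1)
  | Ycomm : DRel q t (gD .Y1 * gD .Y2) (gD .Y2 * gD .Y1)
  | YXX : DRel q t (gD .Y1 * (gD .X1 * gD .X2)) ((q ^ 2) • (gD .X1 * gD .X2 * gD .Y1))
  | X1iY2 : DRel q t (gD .X1i * gD .Y2) (gD .Y2 * gD .X1i * gD .Ti * gD .Ti)
  | hecke : DRel q t ((gD .T + algebraMap ℂ FD t⁻¹) * (gD .T - algebraMap ℂ FD t)) 0

/-- The double affine Hecke algebra `H_{t,q}` of type GL₂. -/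
abbrev DAHA (q t : ℂ) : Type := RingQuot (DRel q t)

variable (q t : ℂ)

def T : DAHA q t := RingQuot.mkAlgHom ℂ (DRel q t) (gD .T)
def Ti : DAHA q t := RingQuot.mkAlgHom ℂ (DRel q t) (gD .Ti)
def X1 : DAHA q t := RingQuot.mkAlgHom ℂ (DRel q t) (gD .X1)
def X1i : DAHA q t := RingQuot.mkAlgHom ℂ (DRel q t) (gD .X1i)
def X2 : DAHA q t := RingQuot.mkAlgHom ℂ (DRel q t) (gD .X2)
def X2i : DAHA q t := RingQuot.mkAlgHom ℂ (DRel q t) (gD .X2i)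
def Y1 : DAHA q t := RingQuot.mkAlgHom ℂ (DRel q t) (gD .Y1)
def Y1i : DAHA q t := RingQuot.mkAlgHom ℂ (DRel q t) (gD .Y1i)
def Y2 : DAHA q t := RingQuot.mkAlgHom ℂ (DRel q t) (gD .Y2)
def Y2i : DAHA q t := RingQuot.mkAlgHom ℂ (DRel q t) (gD .Y2i)

/-- The image of a generator of the DAHA in `H_{t,q}`. -/
def genD (q t : ℂ) (x : DGen) : DAHA q t := RingQuot.mkAlgHom ℂ (DRel q t) (gD x)

/-- The generators of the subalgebra `H⁺_{t,q}`: `T, T⁻¹, X₁, X₂, Y₁, Y₂`. -/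
def hPlusGen : DGen → Prop
  | .T => True | .Ti => True | .X1 => True | .X2 => True | .Y1 => True | .Y2 => True
  | _ => False

/-- The `Y`-degree of a generator: `deg Y₁ = deg Y₂ = (1,0)`, `deg X₁ = deg X₂ = (0,1)`,
`deg T = deg T⁻¹ = (0,0)`. -/
def hDeg1 : DGen → ℕ
  | .Y1 => 1 | .Y2 => 1
  | _ => 0

/-- The `X`-degree of a generator. -/
def hDeg2 : DGen → ℕ
  | .X1 => 1 | .X2 => 1
  | _ => 0

/-- The degree-`(M,N)` graded piece of `H⁺_{t,q}`: the ℂ-span of all products of the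
generators `T, T⁻¹, X₁, X₂, Y₁, Y₂` of total degree `(M,N)`. -/
def hPiece (q t : ℂ) (M N : ℕ) : Submodule ℂ (DAHA q t) :=
  Submodule.span ℂ
    {x | ∃ w : List DGen, (∀ s ∈ w, hPlusGen s) ∧
      (w.map hDeg1).sum = M ∧ (w.map hDeg2).sum = N ∧ x = (w.map (genD q t)).prod}

/-- The symmetrizing idempotent `e = (1 + tT)/(1 + t²)` of the DAHA. -/
def eSym (q t : ℂ) : DAHA q t := ((1 + t ^ 2)⁻¹ : ℂ) • (1 + t • T q t)

/-!
Let `H` be the span of `1` and `T`. The relations give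
`⟨Y₁, Y₂⟩ ⟨X₁, X₂⟩ ⊆ ⟨X₁, X₂⟩ H ⟨Y₁, Y₂⟩`, and both `⟨X₁, X₂⟩` and `⟨Y₁, Y₂⟩` can be moved past `H`,
so the piece of degree `(M, N)` of `H⁺_{t,q}` is contained in `⟨X₁, X₂⟩ᴺ H ⟨Y₁, Y₂⟩ᴹ`. Symmetric
polynomials in `X₁, X₂` or in `Y₁, Y₂` commute with `T`, all polynomials in two variables are
combinations of `1` and the first variable over the symmetric ones, and `e X₁ e`, `e Y₁ e` are
multiples of `(X₁ + X₂) e`, `(Y₁ + Y₂) e`. Sandwiching between two copies of `e` therefore leaves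
the elements `p (e X₁^ε Y₁^ε e) r`, with `ε ≤ 1` and `p`, `r` monomials in the elementary symmetric
polynomials.

For their independence, let the algebra act on the rational functions in `x₁, x₂, y₁, y₂`, with
`T` a Demazure–Lusztig operator in the `x`-variables twisted by one in the `y`-variables. On
functions of `y₁, y₂` alone `Yᵢ` acts as multiplication by `yᵢ`, so the value at `1` of the element
above is `p(x) r(y) e(x₁^ε y₁^ε)`. The functions `1` and `e(x₁ y₁)` are independent over the
functions symmetric in both pairs, since the alternating sum of `e(x₁ y₁)` over the two exchanges
is `(x₁ - x₂)(y₁ - y₂)`.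
-/

/-! ### Normal ordering -/

section TriangularProducts

variable {α : Type*} [Monoid α] [Preorder α] [MulLeftMono α] [MulRightMono α] {H P Q : α}

theorem mul_pow_le_pow_mul (h : H * P ≤ P * H) (n : ℕ) : H * P ^ n ≤ P ^ n * H := by
  induction n with
  | zero => simp
  | succ n ih =>
    calc H * P ^ (n + 1) = H * P ^ n * P := by rw [pow_succ, mul_assoc]
      _ ≤ P ^ n * (H * P) := by rw [← mul_assoc]; gcongr
      _ ≤ P ^ n * (P * H) := by gcongr
      _ = P ^ (n + 1) * H := by rw [pow_succ, mul_assoc]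

theorem pow_mul_le_mul_pow (h : Q * H ≤ H * Q) (n : ℕ) : Q ^ n * H ≤ H * Q ^ n := by
  induction n with
  | zero => simp
  | succ n ih =>
    calc Q ^ (n + 1) * H = Q ^ n * (Q * H) := by rw [pow_succ, mul_assoc]
      _ ≤ Q ^ n * H * Q := by rw [mul_assoc]; gcongr
      _ ≤ H * Q ^ n * Q := by gcongr
      _ = H * Q ^ (n + 1) := by rw [pow_succ, mul_assoc]

theorem mul_pow_le_pow_mul_mul (one_le : 1 ≤ H) (HH : H * H ≤ H) (HP : H * P ≤ P * H)
    (QP : Q * P ≤ P * H * Q) (n : ℕ) : Q * P ^ n ≤ P ^ n * H * Q := by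
  induction n with
  | zero => simpa using mul_le_mul_left one_le Q
  | succ n ih =>
    calc Q * P ^ (n + 1) = Q * P ^ n * P := by rw [pow_succ, mul_assoc]
      _ ≤ P ^ n * H * Q * P := by gcongr
      _ = P ^ n * H * (Q * P) := by rw [mul_assoc]
      _ ≤ P ^ n * H * (P * H * Q) := by gcongr
      _ = P ^ n * (H * P) * H * Q := by simp only [mul_assoc]
      _ ≤ P ^ n * (P * H) * H * Q := by gcongr
      _ = P ^ (n + 1) * (H * H) * Q := by simp only [pow_succ, mul_assoc]
      _ ≤ P ^ (n + 1) * H * Q := by gcongr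

theorem pow_mul_pow_le_pow_mul_mul_pow (one_le : 1 ≤ H) (HH : H * H ≤ H) (HP : H * P ≤ P * H)
    (QH : Q * H ≤ H * Q) (QP : Q * P ≤ P * H * Q) (m n : ℕ) :
    Q ^ m * P ^ n ≤ P ^ n * H * Q ^ m := by
  induction m with
  | zero => simpa using mul_le_mul_right one_le (P ^ n)
  | succ m ih =>
    have hQP := mul_pow_le_pow_mul_mul one_le HH HP QP n
    have hQH := pow_mul_le_mul_pow QH m
    calc Q ^ (m + 1) * P ^ n = Q ^ m * (Q * P ^ n) := by rw [pow_succ, mul_assoc]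
      _ ≤ Q ^ m * (P ^ n * H * Q) := by gcongr
      _ = Q ^ m * P ^ n * H * Q := by simp only [mul_assoc]
      _ ≤ P ^ n * H * Q ^ m * H * Q := by gcongr
      _ = P ^ n * H * (Q ^ m * H) * Q := by simp only [mul_assoc]
      _ ≤ P ^ n * H * (H * Q ^ m) * Q := by gcongr
      _ = P ^ n * (H * H) * Q ^ (m + 1) := by simp only [pow_succ, mul_assoc]
      _ ≤ P ^ n * H * Q ^ (m + 1) := by gcongr

theorem triangular_mul_le (one_le : 1 ≤ H) (HH : H * H ≤ H) (HP : H * P ≤ P * H)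
    (QH : Q * H ≤ H * Q) (QP : Q * P ≤ P * H * Q) (n m n' m' : ℕ) :
    P ^ n * H * Q ^ m * (P ^ n' * H * Q ^ m') ≤ P ^ (n + n') * H * Q ^ (m + m') := by
  have hQP := pow_mul_pow_le_pow_mul_mul_pow one_le HH HP QH QP m n'
  have hHP := mul_pow_le_pow_mul HP n'
  have hQH := pow_mul_le_mul_pow QH m
  have hHHH : H * H * H ≤ H := (mul_le_mul_left HH H).trans HH
  calc P ^ n * H * Q ^ m * (P ^ n' * H * Q ^ m')
      = P ^ n * H * (Q ^ m * P ^ n') * H * Q ^ m' := by simp only [mul_assoc]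
    _ ≤ P ^ n * H * (P ^ n' * H * Q ^ m) * H * Q ^ m' := by gcongr
    _ = P ^ n * (H * P ^ n') * H * (Q ^ m * H) * Q ^ m' := by simp only [mul_assoc]
    _ ≤ P ^ n * (P ^ n' * H) * H * (H * Q ^ m) * Q ^ m' := by gcongr
    _ = P ^ (n + n') * (H * H * H) * Q ^ (m + m') := by simp only [pow_add, mul_assoc]
    _ ≤ P ^ (n + n') * H * Q ^ (m + m') := by gcongr

end TriangularProducts

section SymmetricMonomials

variable {k A : Type*} [CommRing k] [Ring A] [Algebra k A] {a b : A}

/-- The monomials `(a + b)ⁱ (a b)ʲ aᵉ` with `e ≤ 1` of total degree `N` in `a, b`: modulo symmetric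
polynomials, every polynomial in two commuting elements reduces to a combination of `1` and `a`. -/
def symmetricMonomials (a b : A) (N : ℕ) : Set A :=
  {z | ∃ i j : ℕ, ∃ ε : Fin 2, i + 2 * j + ε = N ∧ (a + b) ^ i * (a * b) ^ j * a ^ (ε : ℕ) = z}

theorem mul_add_mem_symmetricMonomials (h : Commute a b) {N : ℕ} {z : A}
    (hz : z ∈ symmetricMonomials a b N) : z * (a + b) ∈ symmetricMonomials a b (N + 1) := by
  obtain ⟨i, j, ε, hN, rfl⟩ := hz
  have ha : Commute (a + b) a := (Commute.refl a).add_left h.symm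
  have hb : Commute (a + b) b := h.add_left (Commute.refl b)
  have hab : Commute (a + b) ((a * b) ^ j * a ^ (ε : ℕ)) :=
    ((ha.mul_right hb).pow_right j).mul_right (ha.pow_right ε)
  refine ⟨i + 1, j, ε, by omega, ?_⟩
  rw [pow_succ, mul_assoc, mul_assoc, hab.eq]
  simp only [mul_assoc]

theorem mul_left_mem_span_symmetricMonomials (h : Commute a b) {N : ℕ} {z : A}
    (hz : z ∈ symmetricMonomials a b N) :
    z * a ∈ Submodule.span k (symmetricMonomials a b (N + 1)) := by
  obtain ⟨i, j, ε, hN, rfl⟩ := hz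
  have mem {z : A} (hz : z ∈ symmetricMonomials a b (N + 1)) :
      z ∈ Submodule.span k (symmetricMonomials a b (N + 1)) := Submodule.subset_span hz
  fin_cases ε
  · exact mem ⟨i, j, 1, by simpa using hN, by simp⟩
  · have hsq : a * a = a * (a + b) - a * b := by noncomm_ring
    have hsum : (a + b) ^ i * (a * b) ^ j * (a * (a + b)) ∈ symmetricMonomials a b (N + 1) := by
      rw [← mul_assoc]
      exact mul_add_mem_symmetricMonomials h ⟨i, j, 1, hN, by simp⟩
    have hprod : (a + b) ^ i * (a * b) ^ j * (a * b) ∈ symmetricMonomials a b (N + 1) :=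
      ⟨i, j + 1, 0, by simp only [Fin.val_zero] at hN ⊢; omega,
        by simp [pow_succ, mul_assoc]⟩
    have := sub_mem (mem hsum) (mem hprod)
    simpa [mul_assoc, ← mul_sub, ← hsq] using this

theorem span_pair_pow_le_span_symmetricMonomials (h : Commute a b) (N : ℕ) :
    Submodule.span k {a, b} ^ N ≤ Submodule.span k (symmetricMonomials a b N) := by
  induction N with
  | zero =>
    rw [pow_zero, Submodule.one_le]
    exact Submodule.subset_span ⟨0, 0, 0, by simp, by simp⟩
  | succ N ih =>
    refine (mul_le_mul_left ih _).trans ?_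
    rw [Submodule.span_mul_span, Submodule.span_le, Set.mul_subset_iff]
    have mul_left_mem {z : A} (hz : z ∈ symmetricMonomials a b N) :=
      mul_left_mem_span_symmetricMonomials (k := k) h hz
    rintro z hz _ (rfl | rfl)
    · exact mul_left_mem hz
    · have := sub_mem (Submodule.subset_span (mul_add_mem_symmetricMonomials h hz))
        (mul_left_mem hz)
      rwa [← mul_sub, add_sub_cancel_left] at this

end SymmetricMonomials

section Hecke

variable {k A : Type*} [Field k] [Ring A] [Algebra k A] {t : k} {T Z₁ Z₂ : A}

open Submodule

/-- The relations between the finite Hecke generator `T` and one pair of commuting variables in the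
double affine Hecke algebra of type GL₂. Both `(X₁, X₂)` and `(Y₂, Y₁)` are such pairs. -/
structure HeckePair (t : k) (T Z₁ Z₂ : A) : Prop where
  quadratic : T * T = 1 + (t - t⁻¹) • T
  conj : T * Z₁ * T = Z₂
  commute : Commute Z₁ Z₂

/-- The symmetrizing idempotent `(1 + t T) / (1 + t²)` of the finite Hecke algebra. -/
def heckeIdempotent (t : k) (T : A) : A := (1 + t ^ 2)⁻¹ • (1 + t • T)

theorem mul_heckeIdempotent (hT : T * T = 1 + (t - t⁻¹) • T) (ht : t ≠ 0) :
    T * heckeIdempotent t T = t • heckeIdempotent t T := by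
  rw [heckeIdempotent, mul_smul_comm, smul_comm t]
  congr 1
  have hc : t * (t - t⁻¹) = t ^ 2 - 1 := by field_simp
  rw [mul_add, mul_smul_comm, hT, mul_one, smul_add, smul_smul, hc]
  module

theorem isIdempotentElem_heckeIdempotent (hT : T * T = 1 + (t - t⁻¹) • T) (ht : t ≠ 0)
    (ht' : 1 + t ^ 2 ≠ 0) : IsIdempotentElem (heckeIdempotent t T) := by
  unfold IsIdempotentElem
  nth_rw 1 [heckeIdempotent]
  rw [smul_mul_assoc, add_mul, one_mul, smul_mul_assoc, mul_heckeIdempotent hT ht, smul_smul,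
    ← sq, ← one_smul k (heckeIdempotent t T), smul_smul, ← add_smul, smul_smul, mul_one,
    inv_mul_cancel₀ ht', one_smul]

theorem commute_heckeIdempotent {a : A} (h : Commute T a) :
    Commute (heckeIdempotent t T) a :=
  ((Commute.one_left a).add_left (h.smul_left t)).smul_left _

theorem span_one_self_le_span_one_heckeIdempotent (ht : t ≠ 0) (ht' : 1 + t ^ 2 ≠ 0) :
    span k {1, T} ≤ span k {1, heckeIdempotent t T} := by
  rw [span_le]
  rintro _ (rfl | rfl)
  · exact subset_span (by simp)
  · refine mem_span_pair.mpr ⟨-t⁻¹, t⁻¹ * (1 + t ^ 2), ?_⟩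
    rw [heckeIdempotent, smul_smul, mul_assoc, mul_inv_cancel₀ ht', mul_one, smul_add, smul_smul,
      inv_mul_cancel₀ ht, one_smul, neg_smul, neg_add_cancel_left]

theorem span_one_self_mul_le (hT : T * T = 1 + (t - t⁻¹) • T) :
    span k {1, T} * span k {1, T} ≤ span k {1, T} := by
  rw [span_mul_span, span_le, Set.mul_subset_iff]
  rintro _ (rfl | rfl) _ (rfl | rfl)
  · exact subset_span (by simp)
  · exact subset_span (by simp)
  · exact subset_span (by simp)
  · exact mem_span_pair.mpr ⟨1, t - t⁻¹, by rw [one_smul]; exact hT.symm⟩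

namespace HeckePair

variable (h : HeckePair t T Z₁ Z₂)

include h

theorem snd_mul : Z₂ * T = T * Z₁ + (t - t⁻¹) • Z₂ := by
  rw [← h.conj, mul_assoc, h.quadratic, mul_add, mul_one, mul_smul_comm]

theorem mul_snd : T * Z₂ = Z₁ * T + (t - t⁻¹) • Z₂ := by
  rw [← h.conj, mul_assoc, ← mul_assoc, h.quadratic, add_mul, one_mul, smul_mul_assoc]

theorem mul_fst : T * Z₁ = Z₂ * T - (t - t⁻¹) • Z₂ := by
  rw [h.snd_mul, add_sub_cancel_right]

theorem fst_mul : Z₁ * T = T * Z₂ - (t - t⁻¹) • Z₂ := by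
  rw [h.mul_snd, add_sub_cancel_right]

theorem commute_add : Commute T (Z₁ + Z₂) := by
  rw [Commute, SemiconjBy, mul_add, add_mul, h.mul_fst, h.mul_snd]
  abel

theorem commute_mul : Commute T (Z₁ * Z₂) :=
  calc T * (Z₁ * Z₂) = T * Z₁ * T * Z₁ * T := by rw [← h.conj]; simp only [mul_assoc]
    _ = Z₁ * Z₂ * T := by rw [h.conj, h.commute.eq]

theorem span_one_mul_span_le :
    span k {1, T} * span k {Z₁, Z₂} ≤ span k {Z₁, Z₂} * span k {1, T} := by
  have mem {z s : A} (hz : z ∈ ({Z₁, Z₂} : Set A)) (hs : s ∈ ({1, T} : Set A)) :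
      z * s ∈ span k {Z₁, Z₂} * span k {1, T} := mul_mem_mul (subset_span hz) (subset_span hs)
  have snd_mem : Z₂ ∈ span k {Z₁, Z₂} * span k {1, T} := by
    simpa using mem (z := Z₂) (s := 1) (by simp) (by simp)
  rw [span_mul_span, span_le, Set.mul_subset_iff]
  rintro _ (rfl | rfl) z hz
  · simpa using mem hz (s := 1) (by simp)
  · obtain rfl | rfl := hz
    · rw [SetLike.mem_coe, h.mul_fst]
      exact sub_mem (mem (by simp) (by simp)) (smul_mem _ _ snd_mem)
    · rw [SetLike.mem_coe, h.mul_snd]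
      exact add_mem (mem (by simp) (by simp)) (smul_mem _ _ snd_mem)

theorem span_mul_span_one_le :
    span k {Z₁, Z₂} * span k {1, T} ≤ span k {1, T} * span k {Z₁, Z₂} := by
  have mem {z s : A} (hs : s ∈ ({1, T} : Set A)) (hz : z ∈ ({Z₁, Z₂} : Set A)) :
      s * z ∈ span k {1, T} * span k {Z₁, Z₂} := mul_mem_mul (subset_span hs) (subset_span hz)
  have snd_mem : Z₂ ∈ span k {1, T} * span k {Z₁, Z₂} := by
    simpa using mem (z := Z₂) (s := 1) (by simp) (by simp)
  rw [span_mul_span, span_le, Set.mul_subset_iff]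
  rintro z hz _ (rfl | rfl)
  · simpa using mem (s := 1) (by simp) hz
  · obtain rfl | rfl := hz
    · rw [SetLike.mem_coe, h.fst_mul]
      exact sub_mem (mem (by simp) (by simp)) (smul_mem _ _ snd_mem)
    · rw [SetLike.mem_coe, h.snd_mul]
      exact add_mem (mem (by simp) (by simp)) (smul_mem _ _ snd_mem)

theorem heckeIdempotent_mul_fst_mul (ht : t ≠ 0) :
    heckeIdempotent t T * Z₁ * heckeIdempotent t T =
      (1 + t ^ 2)⁻¹ • ((Z₁ + Z₂) * heckeIdempotent t T) := by
  set e := heckeIdempotent t T with he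
  have hTZe : t • (T * (Z₁ * e)) = Z₂ * e := by
    rw [← mul_assoc, h.mul_fst, sub_mul, mul_assoc, he, mul_heckeIdempotent h.quadratic ht,
      mul_smul_comm, smul_mul_assoc, ← sub_smul, sub_sub_cancel, smul_smul, mul_inv_cancel₀ ht,
      one_smul]
  nth_rw 1 [he]
  rw [heckeIdempotent, smul_mul_assoc, smul_mul_assoc, mul_assoc, add_mul, one_mul, smul_mul_assoc,
    hTZe, add_mul]

theorem heckeIdempotent_mul_snd_mul (ht : t ≠ 0) (ht' : 1 + t ^ 2 ≠ 0) :
    heckeIdempotent t T * Z₂ * heckeIdempotent t T =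
      (1 - (1 + t ^ 2)⁻¹) • ((Z₁ + Z₂) * heckeIdempotent t T) := by
  set e := heckeIdempotent t T
  have hsum : e * (Z₁ + Z₂) * e = (Z₁ + Z₂) * e := by
    rw [(commute_heckeIdempotent h.commute_add).eq, mul_assoc,
      (isIdempotentElem_heckeIdempotent h.quadratic ht ht').eq]
  rw [sub_smul, one_smul, ← h.heckeIdempotent_mul_fst_mul ht, ← hsum, mul_add, add_mul,
    add_sub_cancel_left]

end HeckePair

end Hecke

section PositiveRelations

variable {k A : Type*} [Field k] [Ring A] [Algebra k A] {q t : k} {T X₁ X₂ Y₁ Y₂ : A}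

open Submodule
open scoped Pointwise

/-- The relations of the double affine Hecke algebra of type GL₂ written in terms of `T`, `X₁`,
`X₂`, `Y₁`, `Y₂` alone, together with the invertibility of `X₂`. They suffice to put every product
of these five elements in normal order. -/
structure PositiveRelations (q t : k) (T X₁ X₂ Y₁ Y₂ : A) : Prop where
  hecke_X : HeckePair t T X₁ X₂
  hecke_Y : HeckePair t T Y₂ Y₁
  X₁_mul_Y₂ : X₁ * Y₂ = Y₂ * T * T * X₁
  Y₁_mul_X₁_mul_X₂ : Y₁ * (X₁ * X₂) = q ^ 2 • (X₁ * X₂ * Y₁)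
  isUnit_X₂ : IsUnit X₂

/-- The element `p₁^b₁ p₂^b₂ (e X₁^ε Y₁^ε e) r₁^a₁ r₂^a₂` attached to `x = (a₁, a₂, b₁, b₂, ε)`,
where `p₁, p₂` and `r₁, r₂` are the elementary symmetric polynomials in `X₁, X₂` and `Y₁, Y₂`. -/
def sphericalMonomial (t : k) (T X₁ X₂ Y₁ Y₂ : A) (x : ℕ × ℕ × ℕ × ℕ × Fin 2) : A :=
  (X₁ + X₂) ^ x.2.2.1 * (X₁ * X₂) ^ x.2.2.2.1 *
    (heckeIdempotent t T * (X₁ ^ (x.2.2.2.2 : ℕ) * Y₁ ^ (x.2.2.2.2 : ℕ)) * heckeIdempotent t T) *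
    ((Y₁ + Y₂) ^ x.1 * (Y₁ * Y₂) ^ x.2.1)

theorem map_sphericalMonomial {B : Type*} [Ring B] [Algebra k B] (φ : A →ₐ[k] B)
    (T X₁ X₂ Y₁ Y₂ : A) (x : ℕ × ℕ × ℕ × ℕ × Fin 2) :
    φ (sphericalMonomial t T X₁ X₂ Y₁ Y₂ x) =
      sphericalMonomial t (φ T) (φ X₁) (φ X₂) (φ Y₁) (φ Y₂) x := by
  simp [sphericalMonomial, heckeIdempotent]

/-- The index tuples `(a₁, a₂, b₁, b₂, ε)` whose spherical monomial has bidegree `(M, N)`. -/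
def bidegreeIndices (M N : ℕ) : Set (ℕ × ℕ × ℕ × ℕ × Fin 2) :=
  {x | x.1 + 2 * x.2.1 + (x.2.2.2.2 : ℕ) = M ∧ x.2.2.1 + 2 * x.2.2.2.1 + (x.2.2.2.2 : ℕ) = N}

theorem finite_bidegreeIndices (M N : ℕ) : (bidegreeIndices M N).Finite := by
  refine ((Set.finite_Iic M).prod ((Set.finite_Iic M).prod ((Set.finite_Iic N).prod
    ((Set.finite_Iic N).prod Set.finite_univ)))).subset fun x hx => ?_
  simp only [bidegreeIndices, Set.mem_ofPred_eq] at hx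
  simp only [Set.mem_prod, Set.mem_Iic, Set.mem_univ, and_true]
  omega

theorem HeckePair.exists_heckeIdempotent_mul_fst_pow_mul (h : HeckePair t T X₁ X₂) (ht : t ≠ 0)
    (ht' : 1 + t ^ 2 ≠ 0) (ε : Fin 2) :
    ∃ c : k, heckeIdempotent t T * X₁ ^ (ε : ℕ) * heckeIdempotent t T =
      c • ((X₁ + X₂) ^ (ε : ℕ) * heckeIdempotent t T) := by
  fin_cases ε
  · exact ⟨1, by simpa using (isIdempotentElem_heckeIdempotent h.quadratic ht ht').eq⟩
  · exact ⟨_, by simpa using h.heckeIdempotent_mul_fst_mul ht⟩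

theorem HeckePair.exists_heckeIdempotent_mul_snd_pow_mul (h : HeckePair t T Y₂ Y₁) (ht : t ≠ 0)
    (ht' : 1 + t ^ 2 ≠ 0) (ε : Fin 2) :
    ∃ c : k, heckeIdempotent t T * Y₁ ^ (ε : ℕ) * heckeIdempotent t T =
      c • (heckeIdempotent t T * (Y₁ + Y₂) ^ (ε : ℕ)) := by
  rw [add_comm Y₁, ((commute_heckeIdempotent h.commute_add).pow_right ε).eq]
  fin_cases ε
  · exact ⟨1, by simpa using (isIdempotentElem_heckeIdempotent h.quadratic ht ht').eq⟩
  · exact ⟨_, by simpa using h.heckeIdempotent_mul_snd_mul ht ht'⟩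

theorem mul_sandwich_eq {G : Type*} [Monoid G] {e p r x h y : G} (hp : Commute e p)
    (hr : Commute e r) (hy : Commute r y) :
    e * (p * x * h * (r * y) * e) = p * (e * (x * h * y) * e) * r :=
  calc e * (p * x * h * (r * y) * e) = e * p * (x * h) * (r * y) * e := by simp only [mul_assoc]
    _ = p * e * (x * h) * (y * r) * e := by rw [hp.eq, hy.eq]
    _ = p * (e * (x * h * y)) * (r * e) := by simp only [mul_assoc]
    _ = p * (e * (x * h * y) * e) * r := by rw [← hr.eq]; simp only [mul_assoc]

namespace PositiveRelations

variable (R : PositiveRelations q t T X₁ X₂ Y₁ Y₂)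

include R

theorem Y₁_mul_X₂ : Y₁ * X₂ = T * (X₁ * Y₂) * T := by
  rw [R.X₁_mul_Y₂, ← R.hecke_Y.conj, ← R.hecke_X.conj]
  simp only [mul_assoc]

theorem Y₁_mul_X₁ : Y₁ * X₁ = q ^ 2 • (T * T * X₁ * Y₁) := by
  have hX₁X₂ : T * T * X₁ * (T * X₁ * Y₂ * T) = X₁ * X₂ * Y₁ :=
    calc T * T * X₁ * (T * X₁ * Y₂ * T) = T * (T * X₁ * T * X₁) * Y₂ * T := by
          simp only [mul_assoc]
      _ = T * (X₁ * X₂) * Y₂ * T := by rw [R.hecke_X.conj, R.hecke_X.commute.eq]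
      _ = X₁ * X₂ * (T * Y₂ * T) := by rw [R.hecke_X.commute_mul.eq]; simp only [mul_assoc]
      _ = X₁ * X₂ * Y₁ := by rw [R.hecke_Y.conj]
  refine R.isUnit_X₂.mul_right_cancel ?_
  rw [mul_assoc, R.Y₁_mul_X₁_mul_X₂, ← hX₁X₂, smul_mul_assoc, mul_assoc _ Y₁, R.Y₁_mul_X₂]
  simp only [mul_assoc]

theorem Y₂_mul_T_mul_X₁ : Y₂ * T * X₁ = T * (Y₁ * X₁) - (t - t⁻¹) • (Y₁ * X₁) := by
  rw [R.hecke_Y.fst_mul, sub_mul, smul_mul_assoc, mul_assoc]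

theorem Y₂_mul_X₁ : Y₂ * X₁ = X₁ * Y₂ - (t - t⁻¹) • (Y₂ * T * X₁) := by
  rw [R.X₁_mul_Y₂, mul_assoc Y₂ T T, R.hecke_X.quadratic, mul_add, add_mul, mul_one, mul_smul_comm,
    smul_mul_assoc, add_sub_cancel_right]

theorem Y₂_mul_X₂ : Y₂ * X₂ = Y₂ * T * X₁ * T := by
  rw [← R.hecke_X.conj]
  simp only [mul_assoc]

theorem T_mul_mem_triangular {w : A}
    (hw : w ∈ span k {X₁, X₂} * span k {1, T} * span k {Y₁, Y₂}) :
    T * w ∈ span k {X₁, X₂} * span k {1, T} * span k {Y₁, Y₂} := by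
  have HP := R.hecke_X.span_one_mul_span_le
  have HH := span_one_self_mul_le R.hecke_X.quadratic
  refine SetLike.le_def.mp ?_ (mul_mem_mul (subset_span (s := {1, T}) (by simp)) hw)
  calc span k {1, T} * (span k {X₁, X₂} * span k {1, T} * span k {Y₁, Y₂})
      = span k {1, T} * span k {X₁, X₂} * span k {1, T} * span k {Y₁, Y₂} := by
        simp only [mul_assoc]
    _ ≤ span k {X₁, X₂} * span k {1, T} * span k {1, T} * span k {Y₁, Y₂} := by gcongr
    _ = span k {X₁, X₂} * (span k {1, T} * span k {1, T}) * span k {Y₁, Y₂} := by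
        simp only [mul_assoc]
    _ ≤ span k {X₁, X₂} * span k {1, T} * span k {Y₁, Y₂} := by gcongr

theorem span_Y_mul_span_T_le :
    span k {Y₁, Y₂} * span k {1, T} ≤ span k {1, T} * span k {Y₁, Y₂} := by
  simpa only [Set.pair_comm] using R.hecke_Y.span_mul_span_one_le

theorem mul_T_mem_triangular {w : A}
    (hw : w ∈ span k {X₁, X₂} * span k {1, T} * span k {Y₁, Y₂}) :
    w * T ∈ span k {X₁, X₂} * span k {1, T} * span k {Y₁, Y₂} := by
  have QH := R.span_Y_mul_span_T_le
  have HH := span_one_self_mul_le R.hecke_X.quadratic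
  refine SetLike.le_def.mp ?_ (mul_mem_mul hw (subset_span (s := {1, T}) (by simp)))
  calc span k {X₁, X₂} * span k {1, T} * span k {Y₁, Y₂} * span k {1, T}
      = span k {X₁, X₂} * span k {1, T} * (span k {Y₁, Y₂} * span k {1, T}) := by
        simp only [mul_assoc]
    _ ≤ span k {X₁, X₂} * span k {1, T} * (span k {1, T} * span k {Y₁, Y₂}) := by gcongr
    _ = span k {X₁, X₂} * (span k {1, T} * span k {1, T}) * span k {Y₁, Y₂} := by
        simp only [mul_assoc]
    _ ≤ span k {X₁, X₂} * span k {1, T} * span k {Y₁, Y₂} := by gcongr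

theorem span_Y_mul_span_X_le :
    span k {Y₁, Y₂} * span k {X₁, X₂} ≤ span k {X₁, X₂} * span k {1, T} * span k {Y₁, Y₂} := by
  have mem {y : A} (hy : y ∈ ({Y₁, Y₂} : Set A)) :
      X₁ * y ∈ span k {X₁, X₂} * span k {1, T} * span k {Y₁, Y₂} := by
    have hX₁ : X₁ ∈ span k {X₁, X₂} := subset_span (by simp)
    have h1 : 1 ∈ span k {1, T} := subset_span (by simp)
    simpa using mul_mem_mul (mul_mem_mul hX₁ h1) (subset_span hy)
  have hY₁X₁ : Y₁ * X₁ ∈ span k {X₁, X₂} * span k {1, T} * span k {Y₁, Y₂} := by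
    rw [R.Y₁_mul_X₁, mul_assoc (T * T), mul_assoc T T]
    exact smul_mem _ _ (R.T_mul_mem_triangular (R.T_mul_mem_triangular (mem (.inl rfl))))
  have hY₂TX₁ : Y₂ * T * X₁ ∈ span k {X₁, X₂} * span k {1, T} * span k {Y₁, Y₂} := by
    rw [R.Y₂_mul_T_mul_X₁]
    exact sub_mem (R.T_mul_mem_triangular hY₁X₁) (smul_mem _ _ hY₁X₁)
  rw [span_mul_span, span_le, Set.mul_subset_iff]
  rintro _ (rfl | rfl) _ (rfl | rfl)
  · exact hY₁X₁
  · rw [SetLike.mem_coe, R.Y₁_mul_X₂]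
    exact R.mul_T_mem_triangular (R.T_mul_mem_triangular (mem (.inr rfl)))
  · rw [SetLike.mem_coe, R.Y₂_mul_X₁]
    exact sub_mem (mem (.inr rfl)) (smul_mem _ _ hY₂TX₁)
  · rw [SetLike.mem_coe, R.Y₂_mul_X₂]
    exact R.mul_T_mem_triangular hY₂TX₁

theorem triangular_mul_triangular_le (N M N' M' : ℕ) :
    span k {X₁, X₂} ^ N * span k {1, T} * span k {Y₁, Y₂} ^ M *
        (span k {X₁, X₂} ^ N' * span k {1, T} * span k {Y₁, Y₂} ^ M') ≤
      span k {X₁, X₂} ^ (N + N') * span k {1, T} * span k {Y₁, Y₂} ^ (M + M') :=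
  triangular_mul_le (Submodule.one_le.mpr (subset_span (by simp)))
    (span_one_self_mul_le R.hecke_X.quadratic) R.hecke_X.span_one_mul_span_le
    R.span_Y_mul_span_T_le R.span_Y_mul_span_X_le N M N' M'

theorem triangular_le_span (ht : t ≠ 0) (ht' : 1 + t ^ 2 ≠ 0) (M N : ℕ) :
    span k {X₁, X₂} ^ N * span k {1, T} * span k {Y₁, Y₂} ^ M ≤
      span k (symmetricMonomials X₁ X₂ N * ({1, heckeIdempotent t T} : Set A) *
        symmetricMonomials Y₁ Y₂ M) := by
  rw [← span_mul_span, ← span_mul_span]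
  have hX := span_pair_pow_le_span_symmetricMonomials (k := k) R.hecke_X.commute N
  have hY := span_pair_pow_le_span_symmetricMonomials (k := k) R.hecke_Y.commute.symm M
  have hT := span_one_self_le_span_one_heckeIdempotent (T := T) ht ht'
  gcongr

theorem commute_heckeIdempotent_X (i j : ℕ) :
    Commute (heckeIdempotent t T) ((X₁ + X₂) ^ i * (X₁ * X₂) ^ j) :=
  commute_heckeIdempotent ((R.hecke_X.commute_add.pow_right i).mul_right
    (R.hecke_X.commute_mul.pow_right j))

theorem commute_heckeIdempotent_Y (i j : ℕ) :
    Commute (heckeIdempotent t T) ((Y₁ + Y₂) ^ i * (Y₁ * Y₂) ^ j) := by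
  rw [add_comm, R.hecke_Y.commute.symm.eq]
  exact commute_heckeIdempotent ((R.hecke_Y.commute_add.pow_right i).mul_right
    (R.hecke_Y.commute_mul.pow_right j))

theorem commute_Y_pow (i j n : ℕ) : Commute ((Y₁ + Y₂) ^ i * (Y₁ * Y₂) ^ j) (Y₁ ^ n) :=
  ((((Commute.refl Y₁).add_left R.hecke_Y.commute).pow_left i).mul_left
    (((Commute.refl Y₁).mul_left R.hecke_Y.commute).pow_left j)).pow_right n

theorem separated_mem_span_sphericalMonomial (ht : t ≠ 0) (ht' : 1 + t ^ 2 ≠ 0)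
    {i j a b M N : ℕ} {ε ε' : Fin 2} (hN : i + 2 * j + ε = N) (hM : a + 2 * b + ε' = M) :
    (X₁ + X₂) ^ i * (X₁ * X₂) ^ j *
        (heckeIdempotent t T * X₁ ^ (ε : ℕ) * heckeIdempotent t T *
          (heckeIdempotent t T * Y₁ ^ (ε' : ℕ) * heckeIdempotent t T)) *
        ((Y₁ + Y₂) ^ a * (Y₁ * Y₂) ^ b) ∈
      span k (sphericalMonomial t T X₁ X₂ Y₁ Y₂ '' bidegreeIndices M N) := by
  obtain ⟨c, hc⟩ := R.hecke_X.exists_heckeIdempotent_mul_fst_pow_mul ht ht' ε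
  obtain ⟨d, hd⟩ := R.hecke_Y.exists_heckeIdempotent_mul_snd_pow_mul ht ht' ε'
  have hcomm : Commute ((X₁ * X₂) ^ j) ((X₁ + X₂) ^ (ε : ℕ)) :=
    (((Commute.refl X₁).mul_left R.hecke_X.commute.symm).add_right
      (R.hecke_X.commute.mul_left (Commute.refl X₂))).pow_pow j ε
  have hmonomial :
      (X₁ + X₂) ^ i * (X₁ * X₂) ^ j * ((X₁ + X₂) ^ (ε : ℕ) * heckeIdempotent t T *
        (heckeIdempotent t T * (Y₁ + Y₂) ^ (ε' : ℕ))) * ((Y₁ + Y₂) ^ a * (Y₁ * Y₂) ^ b) =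
      sphericalMonomial t T X₁ X₂ Y₁ Y₂ (ε' + a, b, i + ε, j, 0) :=
    calc
      _ = (X₁ + X₂) ^ i * ((X₁ * X₂) ^ j * (X₁ + X₂) ^ (ε : ℕ)) *
          (heckeIdempotent t T * heckeIdempotent t T) *
          ((Y₁ + Y₂) ^ (ε' : ℕ) * (Y₁ + Y₂) ^ a * (Y₁ * Y₂) ^ b) := by simp only [mul_assoc]
      _ = _ := by simp [sphericalMonomial, hcomm.eq, pow_add, mul_assoc]
  rw [hc, hd, smul_mul_smul_comm, mul_smul_comm, smul_mul_assoc, hmonomial]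
  refine smul_mem _ _ (subset_span ⟨_, ?_, rfl⟩)
  constructor <;> simp only [Fin.val_zero] <;> omega

theorem map_sandwich_triangular_le (ht : t ≠ 0) (ht' : 1 + t ^ 2 ≠ 0) (M N : ℕ) :
    (span k {X₁, X₂} ^ N * span k {1, T} * span k {Y₁, Y₂} ^ M).map
        (LinearMap.mulLeft k (heckeIdempotent t T) ∘ₗ
          LinearMap.mulRight k (heckeIdempotent t T)) ≤
      span k (sphericalMonomial t T X₁ X₂ Y₁ Y₂ '' bidegreeIndices M N) := by
  refine (map_mono (R.triangular_le_span ht ht' M N)).trans ?_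
  rw [map_span, span_le]
  rintro _ ⟨_, ⟨_, ⟨_, ⟨i, j, ε, hN, rfl⟩, h, hh, rfl⟩, _, ⟨a, b, ε', hM, rfl⟩, rfl⟩, rfl⟩
  have he := (isIdempotentElem_heckeIdempotent R.hecke_X.quadratic ht ht').eq
  simp only [LinearMap.comp_apply, LinearMap.mulRight_apply, LinearMap.mulLeft_apply,
    SetLike.mem_coe, mul_sandwich_eq (R.commute_heckeIdempotent_X i j)
      (R.commute_heckeIdempotent_Y a b) (R.commute_Y_pow a b ε')]
  have hsep := R.separated_mem_span_sphericalMonomial ht ht' hN hM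
  obtain rfl | rfl := hh
  · obtain rfl | rfl : ε = 0 ∨ ε = 1 := by omega
    · simpa [← mul_assoc, he] using hsep
    · obtain rfl | rfl : ε' = 0 ∨ ε' = 1 := by omega
      · simpa [mul_assoc, he] using hsep
      · exact subset_span ⟨(a, b, i, j, 1), ⟨hM, hN⟩, by simp [sphericalMonomial]⟩
  · have hee (z : A) : heckeIdempotent t T * (heckeIdempotent t T * z) =
        heckeIdempotent t T * z := by rw [← mul_assoc, he]
    simpa [mul_assoc, hee] using hsep

end PositiveRelations

end PositiveRelations

/-! ### Spherical monomials span -/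

namespace DAHA

variable {q t : ℂ}

open Submodule

theorem T_mul_Ti : T q t * Ti q t = 1 := by
  simpa [T, Ti] using RingQuot.mkAlgHom_rel ℂ (DRel.TTi (q := q) (t := t))

theorem Ti_mul_T : Ti q t * T q t = 1 := by
  simpa [T, Ti] using RingQuot.mkAlgHom_rel ℂ (DRel.TiT (q := q) (t := t))

theorem X1_mul_X1i : X1 q t * X1i q t = 1 := by
  simpa [X1, X1i] using RingQuot.mkAlgHom_rel ℂ (DRel.X1X1i (q := q) (t := t))

theorem X1i_mul_X1 : X1i q t * X1 q t = 1 := by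
  simpa [X1, X1i] using RingQuot.mkAlgHom_rel ℂ (DRel.X1iX1 (q := q) (t := t))

theorem X2_mul_X2i : X2 q t * X2i q t = 1 := by
  simpa [X2, X2i] using RingQuot.mkAlgHom_rel ℂ (DRel.X2X2i (q := q) (t := t))

theorem X2i_mul_X2 : X2i q t * X2 q t = 1 := by
  simpa [X2, X2i] using RingQuot.mkAlgHom_rel ℂ (DRel.X2iX2 (q := q) (t := t))

theorem T_mul_X1_mul_T : T q t * X1 q t * T q t = X2 q t := by
  simpa [T, X1, X2] using RingQuot.mkAlgHom_rel ℂ (DRel.TX1T (q := q) (t := t))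

theorem Ti_mul_Y1_mul_Ti : Ti q t * Y1 q t * Ti q t = Y2 q t := by
  simpa [Ti, Y1, Y2] using RingQuot.mkAlgHom_rel ℂ (DRel.TiY1Ti (q := q) (t := t))

theorem commute_X1_X2 : Commute (X1 q t) (X2 q t) := by
  simpa [Commute, SemiconjBy, X1, X2] using RingQuot.mkAlgHom_rel ℂ (DRel.Xcomm (q := q) (t := t))

theorem commute_Y1_Y2 : Commute (Y1 q t) (Y2 q t) := by
  simpa [Commute, SemiconjBy, Y1, Y2] using RingQuot.mkAlgHom_rel ℂ (DRel.Ycomm (q := q) (t := t))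

theorem Y1_mul_X1_mul_X2 : Y1 q t * (X1 q t * X2 q t) = q ^ 2 • (X1 q t * X2 q t * Y1 q t) := by
  simpa [X1, X2, Y1] using RingQuot.mkAlgHom_rel ℂ (DRel.YXX (q := q) (t := t))

theorem X1i_mul_Y2 : X1i q t * Y2 q t = Y2 q t * X1i q t * Ti q t * Ti q t := by
  simpa [X1i, Y2, Ti] using RingQuot.mkAlgHom_rel ℂ (DRel.X1iY2 (q := q) (t := t))

theorem T_add_mul_T_sub : (T q t + t⁻¹ • 1) * (T q t - t • 1) = 0 := by
  simpa [T, Algebra.algebraMap_eq_smul_one] using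
    RingQuot.mkAlgHom_rel ℂ (DRel.hecke (q := q) (t := t))

theorem T_mul_T (ht : t ≠ 0) : T q t * T q t = 1 + (t - t⁻¹) • T q t := by
  have h := T_add_mul_T_sub (q := q) (t := t)
  simp only [mul_sub, add_mul, mul_smul_comm, smul_mul_assoc, mul_one, one_mul, smul_add,
    smul_smul, mul_inv_cancel₀ ht, one_smul] at h
  rw [← sub_eq_zero, ← h]
  module

theorem T_mul_Y2_mul_T : T q t * Y2 q t * T q t = Y1 q t :=
  calc T q t * Y2 q t * T q t
      = T q t * Ti q t * Y1 q t * (Ti q t * T q t) := by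
        rw [← Ti_mul_Y1_mul_Ti]; simp only [mul_assoc]
    _ = Y1 q t := by rw [T_mul_Ti, Ti_mul_T, one_mul, mul_one]

theorem X1_mul_Y2 : X1 q t * Y2 q t = Y2 q t * T q t * T q t * X1 q t := by
  have hTT : Ti q t * Ti q t * T q t * T q t = 1 := by
    rw [mul_assoc (Ti q t), Ti_mul_T, mul_one, Ti_mul_T]
  calc X1 q t * Y2 q t
      = X1 q t * (Y2 q t * X1i q t * (Ti q t * Ti q t * T q t * T q t)) * X1 q t := by
        rw [hTT, mul_one, mul_assoc, mul_assoc, X1i_mul_X1, mul_one]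
    _ = X1 q t * (Y2 q t * X1i q t * Ti q t * Ti q t) * T q t * T q t * X1 q t := by
        simp only [mul_assoc]
    _ = X1 q t * X1i q t * Y2 q t * T q t * T q t * X1 q t := by
        rw [← X1i_mul_Y2]; simp only [mul_assoc]
    _ = Y2 q t * T q t * T q t * X1 q t := by rw [X1_mul_X1i, one_mul]

theorem positiveRelations (ht : t ≠ 0) :
    PositiveRelations q t (T q t) (X1 q t) (X2 q t) (Y1 q t) (Y2 q t) where
  hecke_X := ⟨T_mul_T ht, T_mul_X1_mul_T, commute_X1_X2⟩
  hecke_Y := ⟨T_mul_T ht, T_mul_Y2_mul_T, commute_Y1_Y2.symm⟩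
  X₁_mul_Y₂ := X1_mul_Y2
  Y₁_mul_X₁_mul_X₂ := Y1_mul_X1_mul_X2
  isUnit_X₂ := ⟨⟨X2 q t, X2i q t, X2_mul_X2i, X2i_mul_X2⟩, rfl⟩

theorem Ti_eq (ht : t ≠ 0) : Ti q t = T q t - (t - t⁻¹) • 1 :=
  calc Ti q t = Ti q t * (T q t * T q t - (t - t⁻¹) • T q t) := by rw [T_mul_T ht]; simp
    _ = T q t - (t - t⁻¹) • 1 := by
      rw [mul_sub, ← mul_assoc, mul_smul_comm, Ti_mul_T, one_mul]

theorem genD_mem_triangular (ht : t ≠ 0) {s : DGen} (hs : hPlusGen s) :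
    genD q t s ∈ span ℂ {X1 q t, X2 q t} ^ hDeg2 s * span ℂ {1, T q t} *
      span ℂ {Y1 q t, Y2 q t} ^ hDeg1 s := by
  have hH : (1 : DAHA q t) ∈ span ℂ {1, T q t} := subset_span (by simp)
  have hX {x : DAHA q t} (hx : x ∈ ({X1 q t, X2 q t} : Set (DAHA q t))) :
      x ∈ span ℂ {X1 q t, X2 q t} * span ℂ {1, T q t} := by
    simpa using mul_mem_mul (subset_span (R := ℂ) hx) hH
  have hY {y : DAHA q t} (hy : y ∈ ({Y1 q t, Y2 q t} : Set (DAHA q t))) :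
      y ∈ span ℂ {1, T q t} * span ℂ {Y1 q t, Y2 q t} := by
    simpa using mul_mem_mul hH (subset_span (R := ℂ) hy)
  cases s <;> simp only [hPlusGen] at hs <;>
    simp only [hDeg1, hDeg2, pow_zero, pow_one, one_mul, mul_one]
  case T => exact subset_span (.inr rfl)
  case Ti =>
    rw [show genD q t .Ti = T q t - (t - t⁻¹) • 1 from Ti_eq ht]
    exact sub_mem (subset_span (.inr rfl)) (smul_mem _ _ hH)
  case X1 => exact hX (.inl rfl)
  case X2 => exact hX (.inr rfl)
  case Y1 => exact hY (.inl rfl)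
  case Y2 => exact hY (.inr rfl)

theorem hPiece_le_triangular (ht : t ≠ 0) (M N : ℕ) :
    hPiece q t M N ≤
      span ℂ {X1 q t, X2 q t} ^ N * span ℂ {1, T q t} * span ℂ {Y1 q t, Y2 q t} ^ M := by
  rw [hPiece, span_le]
  rintro _ ⟨w, hw, rfl, rfl, rfl⟩
  rw [SetLike.mem_coe]
  induction w with
  | nil => simpa using subset_span (by simp)
  | cons s w ih =>
    simp only [List.forall_mem_cons] at hw
    simp only [List.map_cons, List.prod_cons, List.sum_cons]
    exact (positiveRelations ht).triangular_mul_triangular_le _ _ _ _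
      (mul_mem_mul (genD_mem_triangular ht hw.1) (ih hw.2))

theorem mul_mem_hPiece {M N M' N' : ℕ} {a b : DAHA q t} (ha : a ∈ hPiece q t M N)
    (hb : b ∈ hPiece q t M' N') : a * b ∈ hPiece q t (M + M') (N + N') := by
  suffices hPiece q t M N * hPiece q t M' N' ≤ hPiece q t (M + M') (N + N') from
    this (mul_mem_mul ha hb)
  rw [hPiece, hPiece, span_mul_span, span_le, Set.mul_subset_iff]
  rintro _ ⟨w, hw, rfl, rfl, rfl⟩ _ ⟨w', hw', rfl, rfl, rfl⟩
  exact subset_span ⟨w ++ w', by simpa [or_imp, forall_and] using ⟨hw, hw'⟩, by simp, by simp,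
    by simp⟩

theorem pow_mem_hPiece {M N : ℕ} {a : DAHA q t} (ha : a ∈ hPiece q t M N) (n : ℕ) :
    a ^ n ∈ hPiece q t (n * M) (n * N) := by
  induction n with
  | zero => exact subset_span ⟨[], by simp, by simp, by simp, by simp⟩
  | succ n ih => simpa only [pow_succ, add_mul, one_mul] using mul_mem_hPiece ih ha

theorem genD_mem_hPiece {s : DGen} (hs : hPlusGen s) :
    genD q t s ∈ hPiece q t (hDeg1 s) (hDeg2 s) :=
  subset_span ⟨[s], by simpa using hs, by simp, by simp, by simp⟩

theorem monomial_mem_hPiece {M N : ℕ} {x : ℕ × ℕ × ℕ × ℕ × Fin 2} (hx : x ∈ bidegreeIndices M N) :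
    (X1 q t + X2 q t) ^ x.2.2.1 * (X1 q t * X2 q t) ^ x.2.2.2.1 * X1 q t ^ (x.2.2.2.2 : ℕ) * 1 *
      ((Y1 q t + Y2 q t) ^ x.1 * (Y1 q t * Y2 q t) ^ x.2.1 * Y1 q t ^ (x.2.2.2.2 : ℕ)) ∈
      hPiece q t M N := by
  have hX1 : X1 q t ∈ hPiece q t 0 1 := genD_mem_hPiece (s := .X1) trivial
  have hX2 : X2 q t ∈ hPiece q t 0 1 := genD_mem_hPiece (s := .X2) trivial
  have hY1 : Y1 q t ∈ hPiece q t 1 0 := genD_mem_hPiece (s := .Y1) trivial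
  have hY2 : Y2 q t ∈ hPiece q t 1 0 := genD_mem_hPiece (s := .Y2) trivial
  have h := mul_mem_hPiece
    (mul_mem_hPiece (mul_mem_hPiece (pow_mem_hPiece (add_mem hX1 hX2) x.2.2.1)
      (pow_mem_hPiece (mul_mem_hPiece hX1 hX2) x.2.2.2.1)) (pow_mem_hPiece hX1 x.2.2.2.2))
    (mul_mem_hPiece (mul_mem_hPiece (pow_mem_hPiece (add_mem hY1 hY2) x.1)
      (pow_mem_hPiece (mul_mem_hPiece hY1 hY2) x.2.1)) (pow_mem_hPiece hY1 x.2.2.2.2))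
  rw [mul_one]
  obtain ⟨hM, hN⟩ := hx
  convert h using 2 <;> omega

theorem eSym_eq_heckeIdempotent : eSym q t = heckeIdempotent t (T q t) :=
  rfl

theorem map_sandwich_hPiece (ht : t ≠ 0) (ht' : 1 + t ^ 2 ≠ 0) (M N : ℕ) :
    (hPiece q t M N).map
        ((LinearMap.mulLeft ℂ (eSym q t)).comp (LinearMap.mulRight ℂ (eSym q t))) =
      span ℂ (sphericalMonomial t (T q t) (X1 q t) (X2 q t) (Y1 q t) (Y2 q t) ''
        bidegreeIndices M N) := by
  have R := positiveRelations (q := q) ht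
  refine le_antisymm ((map_mono (hPiece_le_triangular ht M N)).trans
    (R.map_sandwich_triangular_le ht ht' M N)) (span_le.mpr ?_)
  rintro _ ⟨x, hx, rfl⟩
  refine ⟨_, monomial_mem_hPiece hx, ?_⟩
  rw [LinearMap.comp_apply, LinearMap.mulRight_apply, LinearMap.mulLeft_apply,
    eSym_eq_heckeIdempotent, mul_sandwich_eq (R.commute_heckeIdempotent_X _ _)
      (R.commute_heckeIdempotent_Y _ _) (R.commute_Y_pow _ _ _), mul_one, sphericalMonomial]

end DAHA

/-! ### The action on rational functions -/

/-- Units of an algebra satisfying the DAHA relations in the `T, π, X`-presentation, in which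
`Y₁ = T π` and `Y₂ = π T⁻¹`. -/
structure IsCherednikSystem {k B : Type*} [Field k] [Ring B] [Algebra k B] (q t : k)
    (T π X₁ X₂ : Bˣ) : Prop where
  hecke : HeckePair t (T : B) X₁ X₂
  π_mul_X₁ : (π * X₁ : B) = q ^ 2 • (X₂ * π : B)
  π_mul_X₂ : π * X₂ = X₁ * π
  commute_T_π_sq : Commute T (π * π)

namespace IsCherednikSystem

section Relations

variable {k B : Type*} [Field k] [Ring B] [Algebra k B] {q t : k} {T π X₁ X₂ : Bˣ}
  (h : IsCherednikSystem q t T π X₁ X₂)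

include h

theorem T_mul_X₁_mul_T : T * X₁ * T = X₂ :=
  Units.ext h.hecke.conj

theorem commute_Y₁_Y₂ : Commute (T * π) (π * T⁻¹) :=
  calc T * π * (π * T⁻¹) = T * (π * π) * T⁻¹ := by group
    _ = π * T⁻¹ * (T * π) := by rw [h.commute_T_π_sq.eq]; group

theorem X₁_inv_mul_Y₂ : X₁⁻¹ * (π * T⁻¹) = π * T⁻¹ * X₁⁻¹ * T⁻¹ * T⁻¹ :=
  calc X₁⁻¹ * (π * T⁻¹) = X₁⁻¹ * (π * X₂) * X₂⁻¹ * T⁻¹ := by group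
    _ = π * (T * X₁ * T)⁻¹ * T⁻¹ := by rw [h.π_mul_X₂, h.T_mul_X₁_mul_T]; group
    _ = π * T⁻¹ * X₁⁻¹ * T⁻¹ * T⁻¹ := by group

theorem Y₁_mul_X₁_mul_X₂ : (T * π * (X₁ * X₂) : B) = q ^ 2 • (X₁ * X₂ * (T * π) : B) := by
  have hπ : (π * X₂ : B) = X₁ * π := congrArg Units.val h.π_mul_X₂
  calc (T * π * (X₁ * X₂) : B) = T * (π * X₁) * X₂ := by simp only [mul_assoc]
    _ = q ^ 2 • (T * X₂ * (π * X₂) : B) := by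
      rw [h.π_mul_X₁, mul_smul_comm, smul_mul_assoc]; simp only [mul_assoc]
    _ = q ^ 2 • (T * (X₂ * X₁) * π : B) := by rw [hπ]; simp only [mul_assoc]
    _ = q ^ 2 • (X₁ * X₂ * (T * π) : B) := by
      rw [← h.hecke.commute.eq, h.hecke.commute_mul.eq]; simp only [mul_assoc]

end Relations

variable {B : Type*} [Ring B] [Algebra ℂ B] {q t : ℂ} {T π X₁ X₂ : Bˣ}

/-- The images of the generators of the DAHA in the group generated by `T`, `π`, `X₁` and `X₂`. -/
def generator (T π X₁ X₂ : Bˣ) : DGen → Bˣ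
  | .T => T | .Ti => T⁻¹
  | .X1 => X₁ | .X1i => X₁⁻¹ | .X2 => X₂ | .X2i => X₂⁻¹
  | .Y1 => T * π | .Y1i => (T * π)⁻¹ | .Y2 => π * T⁻¹ | .Y2i => (π * T⁻¹)⁻¹

variable (h : IsCherednikSystem q t T π X₁ X₂)

include h

theorem lift_rel (ht : t ≠ 0) {a b : FD} (hab : DRel q t a b) :
    FreeAlgebra.lift ℂ (fun s => (generator T π X₁ X₂ s : B)) a =
      FreeAlgebra.lift ℂ (fun s => (generator T π X₁ X₂ s : B)) b := by
  cases hab <;>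
    simp only [gD, map_mul, map_one, map_smul, map_zero, map_add, map_sub, AlgHom.commutes,
      FreeAlgebra.lift_ι_apply, generator, Units.mul_inv, Units.inv_mul]
  case TX1T => exact h.hecke.conj
  case TiY1Ti => exact congrArg Units.val (by group : T⁻¹ * (T * π) * T⁻¹ = π * T⁻¹)
  case Xcomm => exact h.hecke.commute
  case Ycomm => exact congrArg Units.val h.commute_Y₁_Y₂.eq
  case YXX => exact h.Y₁_mul_X₁_mul_X₂
  case X1iY2 => exact congrArg Units.val h.X₁_inv_mul_Y₂
  case hecke =>
    rw [Algebra.algebraMap_eq_smul_one, Algebra.algebraMap_eq_smul_one, add_mul, mul_sub, mul_sub,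
      h.hecke.quadratic, smul_mul_smul_comm, inv_mul_cancel₀ ht]
    simp only [smul_mul_assoc, mul_smul_comm, mul_one, one_mul]
    module

/-- The representation of the DAHA in which `Y₁` and `Y₂` act by `T π` and `π T⁻¹`. -/
def lift (ht : t ≠ 0) : DAHA q t →ₐ[ℂ] B :=
  RingQuot.liftAlgHom ℂ ⟨FreeAlgebra.lift ℂ fun s => (generator T π X₁ X₂ s : B),
    fun _ _ hab => h.lift_rel ht hab⟩

theorem lift_genD (ht : t ≠ 0) (s : DGen) : h.lift ht (genD q t s) = generator T π X₁ X₂ s := by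
  simp [lift, genD, gD]

end IsCherednikSystem

section DemazureLusztig

variable {k K : Type*} [Field k] [Field K] [Algebra k K] {t : k} {σ τ : K ≃ₐ[k] K} {z a : K}
  {H : Module.End k K}

/-- The Demazure–Lusztig operator `σ H + (t - t⁻¹) z / (z - σ z) (1 - σ)` of an involution `σ`,
twisted by an operator `H`. The classical operator is the case `H = t`. -/
def demazureLusztig (t : k) (σ : K ≃ₐ[k] K) (z : K) (H : Module.End k K) : Module.End k K :=
  AlgEquiv.toLinearMapHom k K σ * H +
    (t - t⁻¹) • (Algebra.lmul k K (z / (z - σ z)) * (1 - AlgEquiv.toLinearMapHom k K σ))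

theorem demazureLusztig_apply (f : K) :
    demazureLusztig t σ z H f = σ (H f) + (t - t⁻¹) • (z / (z - σ z) * (f - σ f)) :=
  rfl

theorem demazureLusztig_apply_of_fixed {f : K} (hf : σ f = f) :
    demazureLusztig t σ z H f = σ (H f) := by
  rw [demazureLusztig_apply, hf, sub_self, mul_zero, smul_zero, add_zero]

theorem commute_demazureLusztig_lmul (ha : σ a = a) (hH : Commute H (Algebra.lmul k K a)) :
    Commute (demazureLusztig t σ z H) (Algebra.lmul k K a) := by
  ext f
  have hHa : H (a * f) = a * H f := LinearMap.congr_fun hH.eq f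
  simp only [Module.End.mul_apply, Algebra.coe_lmul_eq_mul, LinearMap.mul_apply',
    demazureLusztig_apply, map_mul, ha, hHa, mul_add, mul_smul_comm, ← mul_sub, mul_left_comm a]

theorem commute_demazureLusztig_toLinearMap (hτ : Commute σ τ)
    (hz : τ (z / (z - σ z)) = z / (z - σ z)) (hH : Commute H (AlgEquiv.toLinearMapHom k K τ)) :
    Commute (demazureLusztig t σ z H) (AlgEquiv.toLinearMapHom k K τ) := by
  ext f
  have hHτ : H (τ f) = τ (H f) := LinearMap.congr_fun hH.eq f
  have hστ (g : K) : σ (τ g) = τ (σ g) := DFunLike.congr_fun hτ.eq g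
  have hτf (g : K) : AlgEquiv.toLinearMapHom k K τ g = τ g := rfl
  rw [Module.End.mul_apply, Module.End.mul_apply, hτf, hτf, demazureLusztig_apply,
    demazureLusztig_apply, hHτ, hστ, hστ, map_add, map_smul, map_mul, hz, map_sub]

theorem commute_lmul_div {b : K} (ha : Commute H (Algebra.lmul k K a))
    (hb : Commute H (Algebra.lmul k K b)) : Commute H (Algebra.lmul k K (a / b)) := by
  obtain rfl | hb0 := eq_or_ne b 0
  · simp
  ext f
  have hHa (g : K) : H (a * g) = a * H g := LinearMap.congr_fun ha.eq g
  have hHb (g : K) : H (b * g) = b * H g := LinearMap.congr_fun hb.eq g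
  refine mul_left_cancel₀ hb0 ?_
  simp only [Module.End.mul_apply, Algebra.coe_lmul_eq_mul, LinearMap.mul_apply', ← hHb,
    ← mul_assoc, mul_div_cancel₀ _ hb0, hHa]

theorem demazureLusztig_mul_self (hσ : σ * σ = 1) (hz : σ z ≠ z)
    (hH : H * H = 1 + (t - t⁻¹) • H) (hHσ : Commute H (AlgEquiv.toLinearMapHom k K σ))
    (hHz : Commute H (Algebra.lmul k K z)) (hHσz : Commute H (Algebra.lmul k K (σ z))) :
    demazureLusztig t σ z H * demazureLusztig t σ z H =
      1 + (t - t⁻¹) • demazureLusztig t σ z H := by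
  have hσσ (g : K) : σ (σ g) = g := DFunLike.congr_fun hσ g
  have hHH (f : K) : H (H f) = f + (t - t⁻¹) • H f := LinearMap.congr_fun hH f
  have hHσf (f : K) : H (σ f) = σ (H f) := LinearMap.congr_fun hHσ.eq f
  have hHdiv (f : K) : H (z / (z - σ z) * f) = z / (z - σ z) * H f := by
    refine LinearMap.congr_fun (commute_lmul_div hHz ?_).eq f
    simpa only [map_sub] using hHz.sub_right hHσz
  have hsub : z - σ z ≠ 0 := sub_ne_zero.mpr hz.symm
  have hsub' : σ z - z ≠ 0 := sub_ne_zero.mpr hz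
  ext f
  simp only [Module.End.mul_apply, demazureLusztig_apply, LinearMap.add_apply,
    LinearMap.smul_apply, Module.End.one_apply, map_add, map_sub, map_smul, map_mul, map_div₀,
    hσσ, hHH, hHσf, hHdiv]
  simp only [Algebra.smul_def]
  field_simp
  ring

theorem heckePair_demazureLusztig (hσ : σ * σ = 1) (hz : σ z ≠ z)
    (hH : H * H = 1 + (t - t⁻¹) • H) (hHσ : Commute H (AlgEquiv.toLinearMapHom k K σ))
    (hHz : Commute H (Algebra.lmul k K z)) (hHσz : Commute H (Algebra.lmul k K (σ z))) :
    HeckePair t (demazureLusztig t σ z H) (Algebra.lmul k K (σ z)) (Algebra.lmul k K z) := by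
  have hσσ (g : K) : σ (σ g) = g := DFunLike.congr_fun hσ g
  have hHσzf (f : K) : H (σ z * f) = σ z * H f := LinearMap.congr_fun hHσz.eq f
  have hsub : z - σ z ≠ 0 := sub_ne_zero.mpr hz.symm
  have apply_mul (f : K) : demazureLusztig t σ z H (σ z * f) =
      z * (demazureLusztig t σ z H f - (t - t⁻¹) • f) := by
    simp only [demazureLusztig_apply, hHσzf, map_mul, hσσ, Algebra.smul_def]
    field_simp
    ring
  have quadratic := demazureLusztig_mul_self hσ hz hH hHσ hHz hHσz
  refine ⟨quadratic, LinearMap.ext fun f => ?_, Commute.map (Commute.all (σ z) z) _⟩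
  have hTT : demazureLusztig t σ z H (demazureLusztig t σ z H f) =
      f + (t - t⁻¹) • demazureLusztig t σ z H f := LinearMap.congr_fun quadratic f
  simp only [Module.End.mul_apply, Algebra.coe_lmul_eq_mul, LinearMap.mul_apply', apply_mul, hTT,
    add_sub_cancel_right]

/-- An element satisfying the quadratic Hecke relation, as a unit. -/
def heckeUnit {A : Type*} [Ring A] [Algebra k A] (T : A) (hT : T * T = 1 + (t - t⁻¹) • T) : Aˣ where
  val := T
  inv := T - (t - t⁻¹) • 1
  val_inv := by rw [mul_sub, hT, mul_smul_comm, mul_one, add_sub_cancel_right]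
  inv_val := by rw [sub_mul, hT, smul_mul_assoc, one_mul, add_sub_cancel_right]

/-- Multiplication by a nonzero element of a field, as an invertible operator. -/
def mulUnit (k : Type*) {K : Type*} [Field k] [Field K] [Algebra k K] (a : K) (ha : a ≠ 0) :
    (Module.End k K)ˣ :=
  Units.map (Algebra.lmul k K : K →* Module.End k K) (Units.mk0 a ha)

end DemazureLusztig

/-- A field containing the algebraically independent variables `x₁, x₂, y₁, y₂`, with the
automorphisms that underlie the polynomial representation of the DAHA: the exchanges of `x₁, x₂` and
of `y₁, y₂`, and the shift `x₁ ↦ q² x₂`, `x₂ ↦ x₁`. -/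
structure CherednikField {k : Type*} [Field k] (q : k) (K : Type*) [Field K] [Algebra k K] where
  (x₁ x₂ y₁ y₂ : K)
  (swapX swapY shift : K ≃ₐ[k] K)
  algebraicIndependent : AlgebraicIndependent k ![x₁, x₂, y₁, y₂]
  swapX_x₁ : swapX x₁ = x₂
  swapX_y₁ : swapX y₁ = y₁
  swapX_y₂ : swapX y₂ = y₂
  swapY_x₁ : swapY x₁ = x₁
  swapY_x₂ : swapY x₂ = x₂
  swapY_y₁ : swapY y₁ = y₂
  shift_x₁ : shift x₁ = q ^ 2 • x₂
  shift_x₂ : shift x₂ = x₁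
  shift_y₁ : shift y₁ = y₁
  shift_y₂ : shift y₂ = y₂
  swapX_mul_swapX : swapX * swapX = 1
  swapY_mul_swapY : swapY * swapY = 1
  commute_swapX_swapY : Commute swapX swapY
  commute_swapY_shift : Commute swapY shift
  commute_swapX_shift_sq : Commute swapX (shift * shift)

namespace CherednikField

variable {k K : Type*} [Field k] [Field K] [Algebra k K] {q t : k} (F : CherednikField q K)

theorem swapX_x₂ : F.swapX F.x₂ = F.x₁ := by
  rw [← F.swapX_x₁]
  exact DFunLike.congr_fun F.swapX_mul_swapX F.x₁

theorem swapY_y₂ : F.swapY F.y₂ = F.y₁ := by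
  rw [← F.swapY_y₁]
  exact DFunLike.congr_fun F.swapY_mul_swapY F.y₁

theorem x₁_ne_x₂ : F.x₁ ≠ F.x₂ :=
  F.algebraicIndependent.injective.ne (by decide : (0 : Fin 4) ≠ 1)

theorem y₁_ne_y₂ : F.y₁ ≠ F.y₂ :=
  F.algebraicIndependent.injective.ne (by decide : (2 : Fin 4) ≠ 3)

theorem x₁_ne_zero : F.x₁ ≠ 0 :=
  F.algebraicIndependent.ne_zero 0

theorem x₂_ne_zero : F.x₂ ≠ 0 :=
  F.algebraicIndependent.ne_zero 1

theorem y₂_ne_zero : F.y₂ ≠ 0 :=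
  F.algebraicIndependent.ne_zero 3

include F in
theorem q_ne_zero : q ≠ 0 := fun hq => by
  refine F.x₁_ne_zero ((map_eq_zero F.shift).mp ?_)
  have hq2 : q ^ 2 = 0 := by rw [hq, zero_pow two_ne_zero]
  rw [F.shift_x₁, hq2, zero_smul]

/-- The Demazure–Lusztig operator in the variables `y₁, y₂`. -/
def heckeY (t : k) : Module.End k K :=
  demazureLusztig t F.swapY F.y₁ (t • 1)

/-- The operator by which the generator `T` of the DAHA acts: the Demazure–Lusztig operator in the
variables `x₁, x₂` twisted by the one in `y₁, y₂`. -/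
def hecke (t : k) : Module.End k K :=
  demazureLusztig t F.swapX F.x₂ (F.heckeY t)

theorem commute_heckeY_lmul {a : K} (ha : F.swapY a = a) :
    Commute (F.heckeY t) (Algebra.lmul k K a) :=
  commute_demazureLusztig_lmul ha ((Commute.one_left _).smul_left t)

theorem commute_heckeY_swapX : Commute (F.heckeY t) (AlgEquiv.toLinearMapHom k K F.swapX) :=
  commute_demazureLusztig_toLinearMap F.commute_swapX_swapY.symm
    (by simp only [map_div₀, map_sub, F.swapY_y₁, F.swapX_y₁, F.swapX_y₂])
    ((Commute.one_left _).smul_left t)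

theorem commute_heckeY_shift : Commute (F.heckeY t) (AlgEquiv.toLinearMapHom k K F.shift) :=
  commute_demazureLusztig_toLinearMap F.commute_swapY_shift
    (by simp only [map_div₀, map_sub, F.swapY_y₁, F.shift_y₁, F.shift_y₂])
    ((Commute.one_left _).smul_left t)

theorem commute_hecke_lmul {a : K} (hx : F.swapX a = a) (hy : F.swapY a = a) :
    Commute (F.hecke t) (Algebra.lmul k K a) :=
  commute_demazureLusztig_lmul hx (F.commute_heckeY_lmul hy)

theorem commute_hecke_shift_sq :
    Commute (F.hecke t) (AlgEquiv.toLinearMapHom k K (F.shift * F.shift)) := by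
  refine commute_demazureLusztig_toLinearMap F.commute_swapX_shift_sq ?_ ?_
  · simp only [AlgEquiv.mul_apply, map_div₀, map_sub, map_smul, F.swapX_x₂, F.shift_x₁, F.shift_x₂]
    rw [← smul_sub, Algebra.smul_def, Algebra.smul_def, mul_div_mul_left]
    exact (map_ne_zero _).mpr (pow_ne_zero 2 F.q_ne_zero)
  · rw [map_mul]
    exact F.commute_heckeY_shift.mul_right F.commute_heckeY_shift

theorem heckePair_heckeY (ht : t ≠ 0) :
    HeckePair t (F.heckeY t) (Algebra.lmul k K F.y₂) (Algebra.lmul k K F.y₁) := by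
  have hcomm (P : Module.End k K) : Commute (t • 1) P := (Commute.one_left P).smul_left t
  rw [← F.swapY_y₁]
  refine heckePair_demazureLusztig F.swapY_mul_swapY ?_ ?_ (hcomm _) (hcomm _) (hcomm _)
  · rw [F.swapY_y₁]
    exact F.y₁_ne_y₂.symm
  · rw [smul_mul_smul_comm, mul_one, smul_smul, sub_mul, inv_mul_cancel₀ ht]
    module

theorem heckePair_hecke (ht : t ≠ 0) :
    HeckePair t (F.hecke t) (Algebra.lmul k K F.x₁) (Algebra.lmul k K F.x₂) := by
  rw [← F.swapX_x₂]
  refine heckePair_demazureLusztig F.swapX_mul_swapX ?_ (F.heckePair_heckeY ht).quadratic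
    F.commute_heckeY_swapX (F.commute_heckeY_lmul F.swapY_x₂) (F.commute_heckeY_lmul ?_)
  · rw [F.swapX_x₂]
    exact F.x₁_ne_x₂
  · rw [F.swapX_x₂, F.swapY_x₁]

/-- The invertible operator by which the generator `T` of the DAHA acts. -/
def heckeT (ht : t ≠ 0) : (Module.End k K)ˣ :=
  heckeUnit (F.hecke t) (F.heckePair_hecke ht).quadratic

/-- The invertible operator by which `π = T⁻¹ Y₁` acts. -/
def cyclic (ht : t ≠ 0) : (Module.End k K)ˣ :=
  (AlgEquiv.toLinearMapHom k K).toHomUnits F.shift * mulUnit k F.y₂ F.y₂_ne_zero *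
    heckeUnit (F.heckeY t) (F.heckePair_heckeY ht).quadratic

theorem cyclic_apply (ht : t ≠ 0) (f : K) :
    (F.cyclic ht : Module.End k K) f = F.shift (F.y₂ * F.heckeY t f) :=
  rfl

theorem cyclic_mul_apply (ht : t ≠ 0) {a : K} (ha : F.swapY a = a) (f : K) :
    (F.cyclic ht : Module.End k K) (a * f) = F.shift a * (F.cyclic ht : Module.End k K) f := by
  have h : F.heckeY t (a * f) = a * F.heckeY t f :=
    LinearMap.congr_fun (F.commute_heckeY_lmul ha).eq f
  rw [cyclic_apply, cyclic_apply, h, mul_left_comm, map_mul]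

theorem cyclic_mul_cyclic (ht : t ≠ 0) :
    (F.cyclic ht * F.cyclic ht : Module.End k K) =
      AlgEquiv.toLinearMapHom k K (F.shift * F.shift) * Algebra.lmul k K (F.y₂ * F.y₁) := by
  ext f
  have hshift (g : K) : F.heckeY t (F.shift g) = F.shift (F.heckeY t g) :=
    LinearMap.congr_fun F.commute_heckeY_shift.eq g
  have hconj (g : K) : F.heckeY t (F.y₂ * F.heckeY t g) = F.y₁ * g :=
    LinearMap.congr_fun (F.heckePair_heckeY ht).conj g
  calc F.shift (F.y₂ * F.heckeY t (F.shift (F.y₂ * F.heckeY t f)))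
      = F.shift (F.y₂ * F.shift (F.y₁ * f)) := by rw [hshift, hconj]
    _ = F.shift (F.shift (F.y₂ * (F.y₁ * f))) := by simp only [map_mul, F.shift_y₂]
    _ = F.shift (F.shift (F.y₂ * F.y₁ * f)) := by rw [mul_assoc]

theorem isCherednikSystem (ht : t ≠ 0) :
    IsCherednikSystem q t (F.heckeT ht) (F.cyclic ht) (mulUnit k F.x₁ F.x₁_ne_zero)
      (mulUnit k F.x₂ F.x₂_ne_zero) where
  hecke := F.heckePair_hecke ht
  π_mul_X₁ := LinearMap.ext fun f => by
    refine (F.cyclic_mul_apply ht F.swapY_x₁ f).trans ?_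
    rw [F.shift_x₁, smul_mul_assoc]
    rfl
  π_mul_X₂ := Units.ext <| LinearMap.ext fun f => by
    refine (F.cyclic_mul_apply ht F.swapY_x₂ f).trans ?_
    rw [F.shift_x₂]
    rfl
  commute_T_π_sq := Units.ext <| by
    have hcomm := F.commute_hecke_shift_sq.mul_right (F.commute_hecke_lmul (t := t)
      (a := F.y₂ * F.y₁) (by rw [map_mul, F.swapX_y₁, F.swapX_y₂])
      (by rw [map_mul, F.swapY_y₁, F.swapY_y₂, mul_comm]))
    rw [← F.cyclic_mul_cyclic ht] at hcomm
    exact hcomm.eq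

end CherednikField

/-! ### Linear independence -/

section Multipliers

variable {k K : Type*} [CommRing k] [CommRing K] [Algebra k K]

/-- The algebra of pairs `(P, a)` such that `a ∈ S` and the operator `P` acts on `S` as
multiplication by `a`. -/
def multiplierSubalgebra (S : Subalgebra k K) : Subalgebra k (Module.End k K × K) where
  carrier := {p | p.2 ∈ S ∧ ∀ f ∈ S, p.1 f = p.2 * f}
  mul_mem' {p r} hp hr := ⟨mul_mem hp.1 hr.1, fun f hf => by
    rw [Prod.fst_mul, Prod.snd_mul, Module.End.mul_apply, hr.2 f hf, hp.2 _ (mul_mem hr.1 hf),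
      mul_assoc]⟩
  add_mem' {p r} hp hr := ⟨add_mem hp.1 hr.1, fun f hf => by
    rw [Prod.fst_add, Prod.snd_add, LinearMap.add_apply, hp.2 f hf, hr.2 f hf, add_mul]⟩
  algebraMap_mem' c := ⟨S.algebraMap_mem c, fun f _ => by
    simp [Algebra.smul_def]⟩

theorem pow_mul_pow_mul_pow_apply_one {P₁ P₂ : Module.End k K} {S : Subalgebra k K} {y₁ y₂ : K}
    (h₁ : (P₁, y₁) ∈ multiplierSubalgebra S) (h₂ : (P₂, y₂) ∈ multiplierSubalgebra S)
    (n i j : ℕ) :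
    (P₁ ^ n * ((P₁ + P₂) ^ i * (P₁ * P₂) ^ j)) 1 =
      y₁ ^ n * ((y₁ + y₂) ^ i * (y₁ * y₂) ^ j) := by
  have h := mul_mem (pow_mem h₁ n) (mul_mem (pow_mem (add_mem h₁ h₂) i) (pow_mem (mul_mem h₁ h₂) j))
  exact (h.2 1 (one_mem S)).trans (mul_one _)

end Multipliers

namespace CherednikField

variable {k K : Type*} [Field k] [Field K] [Algebra k K] {q t : k} (F : CherednikField q K)

theorem hecke_apply_of_fixed {f : K} (hf : F.swapX f = f) : F.hecke t f = F.heckeY t f := by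
  have hYf : F.heckeY t (F.swapX f) = F.swapX (F.heckeY t f) :=
    LinearMap.congr_fun F.commute_heckeY_swapX.eq f
  rw [hecke, demazureLusztig_apply_of_fixed hf, ← hYf, hf]

theorem hecke_apply_of_symmetric {f : K} (hx : F.swapX f = f) (hy : F.swapY f = f) :
    F.hecke t f = t • f := by
  rw [F.hecke_apply_of_fixed hx, heckeY, demazureLusztig_apply_of_fixed hy, LinearMap.smul_apply,
    Module.End.one_apply, map_smul, hy]

theorem heckeIdempotent_apply_of_symmetric (ht' : 1 + t ^ 2 ≠ 0) {f : K} (hx : F.swapX f = f)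
    (hy : F.swapY f = f) : heckeIdempotent t (F.hecke t) f = f := by
  rw [heckeIdempotent, LinearMap.smul_apply, LinearMap.add_apply, LinearMap.smul_apply,
    Module.End.one_apply, F.hecke_apply_of_symmetric hx hy, smul_smul, ← sq]
  nth_rw 1 [← one_smul k f]
  rw [← add_smul, inv_smul_smul₀ ht']

theorem hecke_apply_pow_mul_pow (ht : t ≠ 0) (ε : Fin 2) :
    F.hecke t (F.x₁ ^ (ε : ℕ) * F.y₁ ^ (ε : ℕ)) = t • (F.x₂ ^ (ε : ℕ) * F.y₂ ^ (ε : ℕ)) := by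
  fin_cases ε
  · simpa using F.hecke_apply_of_symmetric (t := t) (map_one _) (map_one _)
  have h1 : F.heckeY t 1 = t • 1 := by
    rw [← F.hecke_apply_of_fixed (map_one _),
      F.hecke_apply_of_symmetric (map_one _) (map_one _)]
  have hy : F.heckeY t F.y₁ = t • F.y₂ + (t - t⁻¹) • F.y₁ := by
    simpa [h1] using LinearMap.congr_fun (F.heckePair_heckeY ht).mul_snd 1
  have hx : F.hecke t (F.x₁ * F.y₁) = F.x₂ * F.hecke t F.y₁ - (t - t⁻¹) • (F.x₂ * F.y₁) :=
    LinearMap.congr_fun (F.heckePair_hecke ht).mul_fst F.y₁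
  simp only [pow_one]
  rw [hx, F.hecke_apply_of_fixed F.swapX_y₁, hy, mul_add, mul_smul_comm, mul_smul_comm,
    add_sub_cancel_right]

/-- The function `e (x₁ⁿ y₁ⁿ)` for `n ≤ 1`. -/
def symmetrizedPower (t : k) (n : ℕ) : K :=
  (1 + t ^ 2)⁻¹ • (F.x₁ ^ n * F.y₁ ^ n + t ^ 2 • (F.x₂ ^ n * F.y₂ ^ n))

theorem heckeIdempotent_apply_pow_mul_pow (ht : t ≠ 0) (ε : Fin 2) :
    heckeIdempotent t (F.hecke t) (F.x₁ ^ (ε : ℕ) * F.y₁ ^ (ε : ℕ)) = F.symmetrizedPower t ε := by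
  rw [heckeIdempotent, LinearMap.smul_apply, LinearMap.add_apply, LinearMap.smul_apply,
    Module.End.one_apply, F.hecke_apply_pow_mul_pow ht, smul_smul, ← sq, symmetrizedPower]

/-- The functions fixed by the exchange of `x₁, x₂` and by the shift. On these `Y₁` and `Y₂` act as
multiplication by `y₁` and `y₂`. -/
def fixedByXShift : Subalgebra k K :=
  AlgHom.equalizer (F.swapX : K →ₐ[k] K) (AlgHom.id k K) ⊓
    AlgHom.equalizer (F.shift : K →ₐ[k] K) (AlgHom.id k K)

theorem Y₁_mem_multiplierSubalgebra (ht : t ≠ 0) :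
    ((F.heckeT ht * F.cyclic ht : Module.End k K), F.y₁) ∈
      multiplierSubalgebra F.fixedByXShift := by
  refine ⟨⟨F.swapX_y₁, F.shift_y₁⟩, fun f ⟨hX, hS⟩ => ?_⟩
  replace hX : F.swapX f = f := hX
  replace hS : F.shift f = f := hS
  have hYX : F.heckeY t (F.swapX f) = F.swapX (F.heckeY t f) :=
    LinearMap.congr_fun F.commute_heckeY_swapX.eq f
  have hYS : F.heckeY t (F.shift f) = F.shift (F.heckeY t f) :=
    LinearMap.congr_fun F.commute_heckeY_shift.eq f
  have hπ : (F.cyclic ht : Module.End k K) f = F.y₂ * F.heckeY t f := by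
    rw [F.cyclic_apply, map_mul, F.shift_y₂, ← hYS, hS]
  have hfix : F.swapX (F.y₂ * F.heckeY t f) = F.y₂ * F.heckeY t f := by
    rw [map_mul, F.swapX_y₂, ← hYX, hX]
  calc F.hecke t ((F.cyclic ht : Module.End k K) f) = F.heckeY t (F.y₂ * F.heckeY t f) := by
        rw [hπ, F.hecke_apply_of_fixed hfix]
    _ = F.y₁ * f := LinearMap.congr_fun (F.heckePair_heckeY ht).conj f

theorem Y₂_mem_multiplierSubalgebra (ht : t ≠ 0) :
    ((F.cyclic ht * ↑(F.heckeT ht)⁻¹ : Module.End k K), F.y₂) ∈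
      multiplierSubalgebra F.fixedByXShift := by
  refine ⟨⟨F.swapX_y₂, F.shift_y₂⟩, fun f ⟨hX, hS⟩ => ?_⟩
  replace hS : F.shift f = f := hS
  have hTinv : (↑(F.heckeT ht)⁻¹ : Module.End k K) f = F.heckeY t f - (t - t⁻¹) • f := by
    rw [← F.hecke_apply_of_fixed hX]
    rfl
  have hYY : F.heckeY t (F.heckeY t f) = f + (t - t⁻¹) • F.heckeY t f :=
    LinearMap.congr_fun (F.heckePair_heckeY ht).quadratic f
  rw [Module.End.mul_apply, hTinv, F.cyclic_apply, map_sub, map_smul, hYY, add_sub_cancel_right,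
    map_mul, F.shift_y₂, hS]

theorem sphericalMonomial_apply_one (ht : t ≠ 0) (ht' : 1 + t ^ 2 ≠ 0)
    (x : ℕ × ℕ × ℕ × ℕ × Fin 2) :
    sphericalMonomial t (F.hecke t) (Algebra.lmul k K F.x₁) (Algebra.lmul k K F.x₂)
        (F.heckeT ht * F.cyclic ht) (F.cyclic ht * ↑(F.heckeT ht)⁻¹) x 1 =
      (F.x₁ + F.x₂) ^ x.2.2.1 * (F.x₁ * F.x₂) ^ x.2.2.2.1 *
        ((F.y₁ + F.y₂) ^ x.1 * (F.y₁ * F.y₂) ^ x.2.1) * F.symmetrizedPower t x.2.2.2.2 := by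
  obtain ⟨a₁, a₂, b₁, b₂, ε⟩ := x
  have hfX : F.swapX ((F.y₁ + F.y₂) ^ a₁ * (F.y₁ * F.y₂) ^ a₂) =
      (F.y₁ + F.y₂) ^ a₁ * (F.y₁ * F.y₂) ^ a₂ := by
    simp only [map_mul, map_pow, map_add, F.swapX_y₁, F.swapX_y₂]
  have hfY : F.swapY ((F.y₁ + F.y₂) ^ a₁ * (F.y₁ * F.y₂) ^ a₂) =
      (F.y₁ + F.y₂) ^ a₁ * (F.y₁ * F.y₂) ^ a₂ := by
    simp only [map_mul, map_pow, map_add, F.swapY_y₁, F.swapY_y₂, add_comm, mul_comm]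
  have hR (n : ℕ) := pow_mul_pow_mul_pow_apply_one (F.Y₁_mem_multiplierSubalgebra ht)
    (F.Y₂_mem_multiplierSubalgebra ht) n a₁ a₂
  set f := (F.y₁ + F.y₂) ^ a₁ * (F.y₁ * F.y₂) ^ a₂
  set Y₁ : Module.End k K := F.heckeT ht * F.cyclic ht
  set Y₂ : Module.End k K := F.cyclic ht * ↑(F.heckeT ht)⁻¹
  set R := (Y₁ + Y₂) ^ a₁ * (Y₁ * Y₂) ^ a₂
  set e := heckeIdempotent t (F.hecke t)
  have hR1 : R 1 = f := by simpa only [pow_zero, one_mul] using hR 0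
  have hYf : (Y₁ ^ (ε : ℕ)) f = F.y₁ ^ (ε : ℕ) * f := by rw [← hR ε, Module.End.mul_apply, hR1]
  have he : e f = f := F.heckeIdempotent_apply_of_symmetric ht' hfX hfY
  have hef (g : K) : e (f * g) = f * e g :=
    LinearMap.congr_fun
      (commute_heckeIdempotent (k := k) (F.commute_hecke_lmul (t := t) hfX hfY)).eq g
  rw [sphericalMonomial, ← map_add, ← map_mul, ← map_pow, ← map_pow, ← map_pow, ← map_mul]
  calc (F.x₁ + F.x₂) ^ b₁ * (F.x₁ * F.x₂) ^ b₂ *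
        e (F.x₁ ^ (ε : ℕ) * (Y₁ ^ (ε : ℕ)) (e (R 1)))
      = (F.x₁ + F.x₂) ^ b₁ * (F.x₁ * F.x₂) ^ b₂ *
        e (f * (F.x₁ ^ (ε : ℕ) * F.y₁ ^ (ε : ℕ))) := by
        rw [hR1, he, hYf, mul_comm f, mul_assoc (F.x₁ ^ _)]
    _ = _ := by rw [hef, F.heckeIdempotent_apply_pow_mul_pow ht, mul_assoc _ f]

end CherednikField

section ElementarySymmetric

variable {k A : Type*}

theorem isIntegral_of_add_mem_of_mul_mem [CommRing k] [CommRing A] [Algebra k A]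
    {S : Subalgebra k A} {a b : A} (hadd : a + b ∈ S) (hmul : a * b ∈ S) : IsIntegral S a := by
  let p : Polynomial S :=
    Polynomial.X ^ 2 + (Polynomial.C ⟨a * b, hmul⟩ - Polynomial.C ⟨a + b, hadd⟩ * Polynomial.X)
  refine ⟨p, Polynomial.monic_X_pow_add (by compute_degree!), ?_⟩
  simp only [p, Polynomial.eval₂_add, Polynomial.eval₂_sub, Polynomial.eval₂_mul,
    Polynomial.eval₂_C, Polynomial.eval₂_X_pow, Polynomial.eval₂_X, Subalgebra.algebraMap_apply]
  ring

open MvPolynomial in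
theorem algebraicIndependent_of_isIntegral_X {σ : Type*} [Finite σ] [CommRing k] [IsDomain k]
    {p : σ → MvPolynomial σ k}
    (hp : ∀ i, IsIntegral (Algebra.adjoin k (Set.range p)) (X i : MvPolynomial σ k)) :
    AlgebraicIndependent k p := by
  have htop : (integralClosure (Algebra.adjoin k (Set.range p))
      (MvPolynomial σ k)).restrictScalars k = ⊤ := by
    rw [← top_le_iff, ← adjoin_range_X, Algebra.adjoin_le_iff]
    rintro _ ⟨i, rfl⟩
    exact hp i
  have : Algebra.IsIntegral (Algebra.adjoin k (Set.range p)) (MvPolynomial σ k) :=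
    ⟨fun f => (htop ▸ Algebra.mem_top : f ∈ (integralClosure (Algebra.adjoin k (Set.range p))
      (MvPolynomial σ k)).restrictScalars k)⟩
  refine (Algebra.IsAlgebraic.isTranscendenceBasis_of_lift_le_trdeg_of_finite k p ?_).1
  rw [trdeg_of_isDomain]
  simp

open MvPolynomial in
theorem algebraicIndependent_add_mul_X [CommRing k] [IsDomain k] :
    AlgebraicIndependent k
      (![X 0 + X 1, X 0 * X 1, X 2 + X 3, X 2 * X 3] : Fin 4 → MvPolynomial (Fin 4) k) := by
  set p : Fin 4 → MvPolynomial (Fin 4) k := ![X 0 + X 1, X 0 * X 1, X 2 + X 3, X 2 * X 3]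
  have mem (i : Fin 4) : p i ∈ Algebra.adjoin k (Set.range p) := Algebra.subset_adjoin ⟨i, rfl⟩
  refine algebraicIndependent_of_isIntegral_X fun i => ?_
  fin_cases i
  · exact isIntegral_of_add_mem_of_mul_mem (mem 0) (mem 1)
  · exact isIntegral_of_add_mem_of_mul_mem (by rw [add_comm]; exact mem 0)
      (by rw [mul_comm]; exact mem 1)
  · exact isIntegral_of_add_mem_of_mul_mem (mem 2) (mem 3)
  · exact isIntegral_of_add_mem_of_mul_mem (by rw [add_comm]; exact mem 2)
      (by rw [mul_comm]; exact mem 3)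

theorem algebraicIndependent_add_mul [CommRing k] [IsDomain k] [CommRing A] [Algebra k A]
    {x₁ x₂ y₁ y₂ : A} (h : AlgebraicIndependent k ![x₁, x₂, y₁, y₂]) :
    AlgebraicIndependent k ![x₁ + x₂, x₁ * x₂, y₁ + y₂, y₁ * y₂] := by
  convert algebraicIndependent_add_mul_X.map' h using 1
  ext i
  fin_cases i <;> simp

theorem linearIndependent_prod_pow {σ : Type*} [CommRing k] [CommRing A] [Algebra k A] {p : σ → A}
    (hp : AlgebraicIndependent k p) :
    LinearIndependent k fun m : σ →₀ ℕ => m.prod fun i n => p i ^ n := by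
  convert (MvPolynomial.basisMonomials σ k).linearIndependent.map_injOn
    (MvPolynomial.aeval p).toLinearMap hp.injOn
  simp [MvPolynomial.aeval_monomial]

end ElementarySymmetric

namespace CherednikField

variable {k K : Type*} [Field k] [Field K] [Algebra k K] {q t : k} (F : CherednikField q K)

/-- The functions fixed by the exchanges of `x₁, x₂` and of `y₁, y₂`. -/
def symmetricSubalgebra : Subalgebra k K :=
  AlgHom.equalizer (F.swapX : K →ₐ[k] K) (AlgHom.id k K) ⊓
    AlgHom.equalizer (F.swapY : K →ₐ[k] K) (AlgHom.id k K)

theorem symmetrizedPower_zero (ht' : 1 + t ^ 2 ≠ 0) : F.symmetrizedPower t 0 = 1 := by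
  rw [symmetrizedPower, pow_zero, pow_zero, pow_zero, pow_zero, mul_one]
  nth_rw 1 [← one_smul k (1 : K)]
  rw [← add_smul, inv_smul_smul₀ ht']

theorem alternatingSum_symmetrizedPower_one (ht' : 1 + t ^ 2 ≠ 0) :
    F.symmetrizedPower t 1 - F.swapX (F.symmetrizedPower t 1) -
        F.swapY (F.symmetrizedPower t 1) + F.swapX (F.swapY (F.symmetrizedPower t 1)) =
      (F.x₁ - F.x₂) * (F.y₁ - F.y₂) := by
  simp only [symmetrizedPower, pow_one, map_smul, map_add, map_mul, F.swapX_x₁, F.swapX_x₂,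
    F.swapX_y₁, F.swapX_y₂, F.swapY_x₁, F.swapY_x₂, F.swapY_y₁, F.swapY_y₂]
  rw [← smul_sub, ← smul_sub, ← smul_add, inv_smul_eq_iff₀ ht', add_smul, one_smul]
  simp only [Algebra.smul_def]
  ring

theorem linearIndependent_symmetrizedPower (ht' : 1 + t ^ 2 ≠ 0) :
    LinearIndependent F.symmetricSubalgebra ![F.symmetrizedPower t 0, F.symmetrizedPower t 1] := by
  rw [LinearIndependent.pair_iff, F.symmetrizedPower_zero ht']
  rintro ⟨a, haX, haY⟩ ⟨b, hbX, hbY⟩ hab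
  replace haX : F.swapX a = a := haX
  replace haY : F.swapY a = a := haY
  replace hbX : F.swapX b = b := hbX
  replace hbY : F.swapY b = b := hbY
  replace hab : a + b * F.symmetrizedPower t 1 = 0 := by simpa [Subalgebra.smul_def] using hab
  have halt : b * ((F.x₁ - F.x₂) * (F.y₁ - F.y₂)) = 0 := by
    have hX := congrArg F.swapX hab
    have hY := congrArg F.swapY hab
    have hXY := congrArg F.swapX hY
    simp only [map_add, map_mul, map_zero, haX, haY, hbX, hbY] at hX hY hXY
    rw [← F.alternatingSum_symmetrizedPower_one ht']
    linear_combination hab - hX - hY + hXY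
  have hb : b = 0 := (mul_eq_zero.mp halt).resolve_right
    (mul_ne_zero (sub_ne_zero.mpr F.x₁_ne_x₂) (sub_ne_zero.mpr F.y₁_ne_y₂))
  subst hb
  exact ⟨Subtype.ext (by simpa using hab), rfl⟩

theorem linearIndependent_prod_pow_mul_symmetrizedPower (ht' : 1 + t ^ 2 ≠ 0) :
    LinearIndependent k fun p : (Fin 4 →₀ ℕ) × Fin 2 =>
      (p.1.prod fun i n => ![F.x₁ + F.x₂, F.x₁ * F.x₂, F.y₁ + F.y₂, F.y₁ * F.y₂] i ^ n) *
        F.symmetrizedPower t p.2 := by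
  have mem (i : Fin 4) : ![F.x₁ + F.x₂, F.x₁ * F.x₂, F.y₁ + F.y₂, F.y₁ * F.y₂] i ∈
      F.symmetricSubalgebra := by
    constructor <;> fin_cases i <;>
      simp [F.swapX_x₁, F.swapX_x₂, F.swapX_y₁, F.swapX_y₂, F.swapY_x₁, F.swapY_x₂, F.swapY_y₁,
        F.swapY_y₂, add_comm, mul_comm]
  have hprod : LinearIndependent k fun m : Fin 4 →₀ ℕ =>
      (⟨_, prod_mem fun i _ => pow_mem (mem i) (m i)⟩ : F.symmetricSubalgebra) :=
    .of_comp F.symmetricSubalgebra.val.toLinearMap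
      (linearIndependent_prod_pow (algebraicIndependent_add_mul F.algebraicIndependent))
  convert linearIndependent_smul hprod (F.linearIndependent_symmetrizedPower ht') with p
  obtain ⟨m, ε⟩ := p
  fin_cases ε <;> rfl

/-- The exponents, in the order `x₁ + x₂, x₁ x₂, y₁ + y₂, y₁ y₂`, of the spherical monomial with
index tuple `(a₁, a₂, b₁, b₂, ε)`, together with `ε`. -/
def exponents (x : ℕ × ℕ × ℕ × ℕ × Fin 2) : (Fin 4 →₀ ℕ) × Fin 2 :=
  (Finsupp.equivFunOnFinite.symm ![x.2.2.1, x.2.2.2.1, x.1, x.2.1], x.2.2.2.2)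

theorem exponents_injective : Function.Injective exponents := by
  rintro ⟨a₁, a₂, b₁, b₂, ε⟩ ⟨a₁', a₂', b₁', b₂', ε'⟩ h
  simp_all [exponents]

theorem linearIndependent_sphericalMonomial (ht : t ≠ 0) (ht' : 1 + t ^ 2 ≠ 0) :
    LinearIndependent k (sphericalMonomial t (F.hecke t) (Algebra.lmul k K F.x₁)
      (Algebra.lmul k K F.x₂) (F.heckeT ht * F.cyclic ht) (F.cyclic ht * ↑(F.heckeT ht)⁻¹)) := by
  refine .of_comp (LinearMap.applyₗ (1 : K)) ?_
  convert (F.linearIndependent_prod_pow_mul_symmetrizedPower ht').comp _ exponents_injective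
  ext x
  refine (F.sphericalMonomial_apply_one ht ht' x).trans ?_
  simp [exponents, Finsupp.prod_fintype, Fin.prod_univ_four, mul_assoc]

end CherednikField

namespace CherednikField

variable {k : Type*} [Field k] {q : k}

open MvPolynomial IsFractionRing

/-- The automorphism `x₁ ↦ q² x₂`, `x₂ ↦ x₁` of the polynomial ring in `x₁, x₂, y₁, y₂`. -/
def polynomialShift (hq : q ≠ 0) : MvPolynomial (Fin 4) k ≃ₐ[k] MvPolynomial (Fin 4) k :=
  AlgEquiv.ofAlgHom (aeval ![q ^ 2 • X 1, X 0, X 2, X 3])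
    (aeval ![X 1, (q ^ 2)⁻¹ • X 0, X 2, X 3])
    (MvPolynomial.algHom_ext fun i => by fin_cases i <;> simp [smul_smul, hq])
    (MvPolynomial.algHom_ext fun i => by fin_cases i <;> simp [smul_smul, hq])

theorem polynomialShift_X (hq : q ≠ 0) (i : Fin 4) :
    polynomialShift hq (X i) = (![q ^ 2 • X 1, X 0, X 2, X 3] : Fin 4 → MvPolynomial (Fin 4) k) i :=
  aeval_X _ i

theorem renameEquiv_swap_mul_self (i j : Fin 4) :
    renameEquiv k (Equiv.swap i j) * renameEquiv k (Equiv.swap i j) = 1 :=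
  AlgEquiv.coe_toAlgHom_injective <| MvPolynomial.algHom_ext fun l => by simp [rename_X]

theorem commute_renameEquiv_swap :
    Commute (renameEquiv k (Equiv.swap (0 : Fin 4) 1)) (renameEquiv k (Equiv.swap 2 3)) :=
  AlgEquiv.coe_toAlgHom_injective <| MvPolynomial.algHom_ext fun i => by
    fin_cases i <;> simp [rename_X, Equiv.swap_apply_def]

theorem commute_swap_polynomialShift (hq : q ≠ 0) :
    Commute (renameEquiv k (Equiv.swap (2 : Fin 4) 3)) (polynomialShift hq) :=
  AlgEquiv.coe_toAlgHom_injective <| MvPolynomial.algHom_ext fun i => by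
    fin_cases i <;> simp [rename_X, Equiv.swap_apply_def, polynomialShift_X]

theorem commute_swap_polynomialShift_sq (hq : q ≠ 0) :
    Commute (renameEquiv k (Equiv.swap (0 : Fin 4) 1))
      (polynomialShift hq * polynomialShift hq) :=
  AlgEquiv.coe_toAlgHom_injective <| MvPolynomial.algHom_ext fun i => by
    fin_cases i <;> simp [rename_X, Equiv.swap_apply_def, polynomialShift_X]

/-- The field of rational functions in `x₁, x₂, y₁, y₂`, with its two exchanges and the shift. -/
def rationalFunctions (hq : q ≠ 0) : CherednikField q (FractionRing (MvPolynomial (Fin 4) k)) where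
  x₁ := algebraMap (MvPolynomial (Fin 4) k) _ (X 0)
  x₂ := algebraMap (MvPolynomial (Fin 4) k) _ (X 1)
  y₁ := algebraMap (MvPolynomial (Fin 4) k) _ (X 2)
  y₂ := algebraMap (MvPolynomial (Fin 4) k) _ (X 3)
  swapX := fieldEquivOfAlgEquivHom k _ (renameEquiv k (Equiv.swap 0 1))
  swapY := fieldEquivOfAlgEquivHom k _ (renameEquiv k (Equiv.swap 2 3))
  shift := fieldEquivOfAlgEquivHom k _ (polynomialShift hq)
  algebraicIndependent := by
    let ι := Algebra.algHom k (MvPolynomial (Fin 4) k) (FractionRing (MvPolynomial (Fin 4) k))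
    have hX : ![ι (X 0), ι (X 1), ι (X 2), ι (X 3)] = ι ∘ X := by
      ext i
      fin_cases i <;> rfl
    exact hX ▸ (algebraicIndependent_X (Fin 4) k).map' (f := ι) (IsFractionRing.injective _ _)
  swapX_x₁ := by simp [rename_X]
  swapX_y₁ := by simp [rename_X, Equiv.swap_apply_def]
  swapX_y₂ := by simp [rename_X, Equiv.swap_apply_def]
  swapY_x₁ := by simp [rename_X, Equiv.swap_apply_def]
  swapY_x₂ := by simp [rename_X, Equiv.swap_apply_def]
  swapY_y₁ := by simp [rename_X]
  shift_x₁ := by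
    rw [fieldEquivOfAlgEquivHom_apply, fieldEquivOfAlgEquiv_algebraMap, polynomialShift_X]
    exact map_smul (Algebra.algHom k _ _) (q ^ 2) (X 1)
  shift_x₂ := by simp [polynomialShift_X]
  shift_y₁ := by simp [polynomialShift_X]
  shift_y₂ := by simp [polynomialShift_X]
  swapX_mul_swapX := by rw [← map_mul, renameEquiv_swap_mul_self, map_one]
  swapY_mul_swapY := by rw [← map_mul, renameEquiv_swap_mul_self, map_one]
  commute_swapX_swapY := commute_renameEquiv_swap.map _
  commute_swapY_shift := (commute_swap_polynomialShift hq).map _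
  commute_swapX_shift_sq := by
    rw [← map_mul]
    exact (commute_swap_polynomialShift_sq hq).map _

end CherednikField

namespace DAHA

variable {q t : ℂ}

theorem linearIndependent_sphericalMonomial (hq : q ≠ 0) (ht : t ≠ 0) (ht' : 1 + t ^ 2 ≠ 0) :
    LinearIndependent ℂ
      (sphericalMonomial t (T q t) (X1 q t) (X2 q t) (Y1 q t) (Y2 q t)) := by
  let F := CherednikField.rationalFunctions hq
  have h := F.isCherednikSystem ht
  refine .of_comp (h.lift ht).toLinearMap ?_
  have hφ : (h.lift ht).toLinearMap ∘
        sphericalMonomial t (T q t) (X1 q t) (X2 q t) (Y1 q t) (Y2 q t) =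
      sphericalMonomial t (F.hecke t) (Algebra.lmul ℂ _ F.x₁) (Algebra.lmul ℂ _ F.x₂)
        (F.heckeT ht * F.cyclic ht) (F.cyclic ht * ↑(F.heckeT ht)⁻¹) := by
    ext1 x
    refine (map_sphericalMonomial (h.lift ht) _ _ _ _ _ x).trans ?_
    congr 1
    exacts [h.lift_genD ht .T, h.lift_genD ht .X1, h.lift_genD ht .X2, h.lift_genD ht .Y1,
      h.lift_genD ht .Y2]
  exact hφ ▸ F.linearIndependent_sphericalMonomial ht ht'

end DAHA

/-- For every `(M,N) ∈ ℕ₀²`, the ℂ-dimension of the degree-`(M,N)`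
graded piece of `eH⁺_{t,q}e` (the image under `x ↦ e·x·e` of the degree-`(M,N)`
graded piece of `H⁺_{t,q}`) equals the number of tuples
`(a₁, a₂, b₁, b₂, ε) ∈ ℕ₀⁴ × {0,1}` with `a₁ + 2a₂ + ε = M` and `b₁ + 2b₂ + ε = N`. -/
theorem stmt9 (q t : ℂ) (hq : q ≠ 0) (ht : t ≠ 0) (ht2 : t ^ 2 ≠ -1) :
    ∀ M N : ℕ,
      Module.rank ℂ
        (Submodule.map
          ((LinearMap.mulLeft ℂ (eSym q t)).comp (LinearMap.mulRight ℂ (eSym q t)))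
          (hPiece q t M N))
        = Nat.card {x : ℕ × ℕ × ℕ × ℕ × Fin 2 //
            x.1 + 2 * x.2.1 + (x.2.2.2.2 : ℕ) = M ∧
            x.2.2.1 + 2 * x.2.2.2.1 + (x.2.2.2.2 : ℕ) = N} := by
  intro M N
  have ht' : 1 + t ^ 2 ≠ 0 := fun h => ht2 (by linear_combination h)
  have hv := (DAHA.linearIndependent_sphericalMonomial hq ht ht').comp
    ((↑) : bidegreeIndices M N → _) Subtype.val_injective
  have : Finite (bidegreeIndices M N) := finite_bidegreeIndices M N
  rw [DAHA.map_sandwich_hPiece ht ht', Set.image_eq_range]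
  exact (rank_span hv).trans ((Cardinal.mk_range_eq _ hv.injective).trans Nat.cast_card.symm)
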